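/- arXiv:2512.16942 — 2 statements merged into one kernel-verified Lean document; each statement's English description precedes it below -/
import Mathlib

section
/- Let q be a prime power with q > 2809. Then for every integer n with 1 < n < q and (n-1) dividing (q-1), not every element of F_q is the sum of a 5-potent element and an n-potent element, i.e., C_5 + C_n is a proper subset of F_q. -/
/-!
The nonzero `n`-potents are the `d`-th roots of unity with `d = gcd (n - 1) (q - 1)`; write
`q - 1 = d * k`. If `k` is even, all `n`-potents are squares, so a `γ` such that `γ - a` is a
nonsquare for every `5`-potent `a` is not a sum; if `k = 3`, cubes take the place of squares. Such
a `γ` is found by a sieve whose error terms are quadratic and cubic character sums. These are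
bounded by Hasse's theorem, the sums attached to curves of genus 2 splitting into elliptic ones.
Hasse's theorem itself is proved after Manin, by comparing the heights of the points `Q + nP` on a
quadratic twist over the field of rational functions, with `P` the generic point and `Q` its
Frobenius image.

If `k ≥ 5`, then `|C_5| |C_n|` barely exceeds `q`, whereas each `x ∈ C_n` with `x + 1 ∈ C_n` costs
one sum, because `0, 1 ∈ C_5`; a second moment over the lines of the affine plane shows that there
are about `d² / q` such `x`. In characteristic 2 there are only two `5`-potents, and counting
suffices.
-/

open Finset Polynomial

section RatHeight

variable {F : Type*} [Field F]

/-- The height of a rational function: its degree as a self-map of the projective line. -/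
noncomputable def ratHeight (u : RatFunc F) : ℕ :=
  max u.num.natDegree u.denom.natDegree

theorem ratHeight_algebraMap (p : F[X]) :
    ratHeight (algebraMap F[X] (RatFunc F) p) = p.natDegree := by
  simp [ratHeight]

theorem exists_eq_num_mul_and_eq_denom_mul (U : F[X]) {V : F[X]} (hV : V ≠ 0) :
    ∃ e ≠ 0, U = (algebraMap F[X] (RatFunc F) U / algebraMap F[X] (RatFunc F) V).num * e ∧
      V = (algebraMap F[X] (RatFunc F) U / algebraMap F[X] (RatFunc F) V).denom * e := by
  obtain ⟨e, he⟩ := RatFunc.denom_div_dvd U V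
  have hcross := (RatFunc.num_mul_eq_mul_denom_iff hV (p := U)).2 rfl
  refine ⟨e, right_ne_zero_of_mul (he ▸ hV), ?_, he⟩
  refine mul_right_cancel₀ (RatFunc.denom_ne_zero
    (algebraMap F[X] (RatFunc F) U / algebraMap F[X] (RatFunc F) V)) ?_
  rw [← hcross, mul_assoc, mul_comm e, ← he]

theorem ratHeight_div_add_natDegree_le {U V G : F[X]} (hV : V ≠ 0) (hGU : G ∣ U) (hGV : G ∣ V) :
    ratHeight (algebraMap F[X] (RatFunc F) U / algebraMap F[X] (RatFunc F) V) + G.natDegree ≤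
      max U.natDegree V.natDegree := by
  obtain ⟨e, he, hUe, hVe⟩ := exists_eq_num_mul_and_eq_denom_mul U hV
  set u := algebraMap F[X] (RatFunc F) U / algebraMap F[X] (RatFunc F) V
  have hGe : G ∣ e := by
    obtain ⟨s, t, hst⟩ := u.isCoprime_num_denom
    have : e = s * U + t * V := by
      rw [hUe, hVe]
      linear_combination (-e) * hst
    exact this ▸ dvd_add (hGU.mul_left s) (hGV.mul_left t)
  have hdegG : G.natDegree ≤ e.natDegree := natDegree_le_of_dvd hGe he
  have hdegV : V.natDegree = u.denom.natDegree + e.natDegree := by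
    rw [← natDegree_mul u.denom_ne_zero he, ← hVe]
  have hdegU : u.num = 0 ∨ U.natDegree = u.num.natDegree + e.natDegree := by
    refine or_iff_not_imp_left.2 fun hnum => ?_
    rw [← natDegree_mul hnum he, ← hUe]
  unfold ratHeight
  rcases hdegU with hnum | hdegU
  · rw [hnum, natDegree_zero]
    omega
  · omega

theorem ratHeight_div_le {U V : F[X]} {d : ℕ} (hV : V ≠ 0) (hUd : U.natDegree ≤ d)
    (hVd : V.natDegree ≤ d) :
    ratHeight (algebraMap F[X] (RatFunc F) U / algebraMap F[X] (RatFunc F) V) ≤ d := by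
  have := ratHeight_div_add_natDegree_le hV (one_dvd U) (one_dvd V)
  omega

theorem mul_dvd_of_isCoprime_of_sum_of_prod {R : Type*} [CommRing R]
    {N D N' D' G₀ G₁ G₂ : R} (h : IsCoprime N D) (h' : IsCoprime N' D')
    (hsum : (N * D' + N' * D) * G₀ = G₁ * (D * D')) (hprod : N * N' * G₀ = G₂ * (D * D')) :
    D * D' ∣ G₀ := by
  obtain ⟨s, t, hst⟩ := h'
  have hN : D * D' ∣ N ^ 2 * G₀ := by
    refine ⟨s * N * G₂ + t * (N * G₁ - D * G₂), ?_⟩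
    linear_combination (-G₀ * N ^ 2) * hst + (s * N - t * D) * hprod + (t * N) * hsum
  have hD : D * D' ∣ D ^ 2 * G₀ := by
    refine ⟨t * D * G₀ + s * (D * G₁ - N * G₀), ?_⟩
    linear_combination (-G₀ * D ^ 2) * hst + (s * D) * hsum
  obtain ⟨p, r, hpr⟩ : IsCoprime (N ^ 2) (D ^ 2) := h.pow
  have hG₀ : G₀ = p * (N ^ 2 * G₀) + r * (D ^ 2 * G₀) := by linear_combination (-G₀) * hpr
  rw [hG₀]
  exact dvd_add (hN.mul_left p) (hD.mul_left r)

theorem coeff_max_natDegree_ne_zero {R : Type*} [Semiring R] {N D : R[X]} (hD : D ≠ 0)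
    (h : D.coeff (max N.natDegree D.natDegree) = 0) :
    N.coeff (max N.natDegree D.natDegree) ≠ 0 := by
  rcases le_total N.natDegree D.natDegree with hle | hle
  · rw [max_eq_right hle, coeff_natDegree, leadingCoeff_eq_zero] at h
    exact absurd h hD
  · rw [max_eq_left hle] at h ⊢
    rw [coeff_natDegree, leadingCoeff_ne_zero]
    rintro rfl
    rw [natDegree_zero, Nat.le_zero] at hle
    rw [natDegree_zero, ← hle, coeff_natDegree, leadingCoeff_eq_zero] at h
    exact hD h

-- Gauss's lemma for the valuation at infinity: in degree `max + max` the three leading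
-- coefficients cannot all vanish.
theorem max_natDegree_add_max_natDegree_le {R : Type*} [CommRing R] [NoZeroDivisors R]
    {N D N' D' : R[X]} {d : ℕ} (hD : D ≠ 0) (hD' : D' ≠ 0)
    (hden : (D * D').natDegree ≤ d) (hsum : (N * D' + N' * D).natDegree ≤ d)
    (hprod : (N * N').natDegree ≤ d) :
    max N.natDegree D.natDegree + max N'.natDegree D'.natDegree ≤ d := by
  by_contra! hlt
  set k := max N.natDegree D.natDegree with hk
  set k' := max N'.natDegree D'.natDegree with hk'
  have hNk : N.natDegree ≤ k := le_max_left _ _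
  have hDk : D.natDegree ≤ k := le_max_right _ _
  have hNk' : N'.natDegree ≤ k' := le_max_left _ _
  have hDk' : D'.natDegree ≤ k' := le_max_right _ _
  have h₀ : D.coeff k * D'.coeff k' = 0 := by
    rw [← coeff_mul_add_eq_of_natDegree_le hDk hDk']
    exact coeff_eq_zero_of_natDegree_lt (hden.trans_lt hlt)
  have h₁ : N.coeff k * D'.coeff k' + D.coeff k * N'.coeff k' = 0 := by
    rw [← coeff_mul_add_eq_of_natDegree_le hNk hDk', ← coeff_mul_add_eq_of_natDegree_le hDk hNk',
      ← coeff_add, mul_comm D]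
    exact coeff_eq_zero_of_natDegree_lt (hsum.trans_lt hlt)
  have h₂ : N.coeff k * N'.coeff k' = 0 := by
    rw [← coeff_mul_add_eq_of_natDegree_le hNk hNk']
    exact coeff_eq_zero_of_natDegree_lt (hprod.trans_lt hlt)
  have h_zero (h : D.coeff k = 0) : N.coeff k ≠ 0 := coeff_max_natDegree_ne_zero hD h
  have h_zero' (h : D'.coeff k' = 0) : N'.coeff k' ≠ 0 := coeff_max_natDegree_ne_zero hD' h
  rcases mul_eq_zero.1 h₀ with h | h
  · simp_all
  · simp_all

theorem ratHeight_add_ratHeight_le {u v : RatFunc F} {G₀ G₁ G₂ : F[X]} {d : ℕ} (hG₀ : G₀ ≠ 0)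
    (hsum : (u + v) * algebraMap F[X] (RatFunc F) G₀ = algebraMap F[X] (RatFunc F) G₁)
    (hprod : u * v * algebraMap F[X] (RatFunc F) G₀ = algebraMap F[X] (RatFunc F) G₂)
    (h₀ : G₀.natDegree ≤ d) (h₁ : G₁.natDegree ≤ d) (h₂ : G₂.natDegree ≤ d) :
    ratHeight u + ratHeight v ≤ d := by
  have hu := RatFunc.algebraMap_ne_zero u.denom_ne_zero
  have hv := RatFunc.algebraMap_ne_zero v.denom_ne_zero
  have hnum_u := (div_eq_iff hu).1 u.num_div_denom
  have hnum_v := (div_eq_iff hv).1 v.num_div_denom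
  have hsum' : (u.num * v.denom + v.num * u.denom) * G₀ = G₁ * (u.denom * v.denom) := by
    apply RatFunc.algebraMap_injective F
    simp only [map_mul, map_add, hnum_u, hnum_v, ← hsum]
    ring
  have hprod' : u.num * v.num * G₀ = G₂ * (u.denom * v.denom) := by
    apply RatFunc.algebraMap_injective F
    simp only [map_mul, hnum_u, hnum_v, ← hprod]
    ring
  have hdenom : u.denom * v.denom ≠ 0 := mul_ne_zero u.denom_ne_zero v.denom_ne_zero
  obtain ⟨e, he⟩ := mul_dvd_of_isCoprime_of_sum_of_prod u.isCoprime_num_denom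
    v.isCoprime_num_denom hsum' hprod'
  have natDegree_le_of_mul_eq {A B : F[X]} (hB : B.natDegree ≤ d)
      (hAB : A * G₀ = B * (u.denom * v.denom)) : A.natDegree ≤ d := by
    rcases eq_or_ne A 0 with rfl | hA
    · simp
    · refine (natDegree_le_of_dvd ⟨e, ?_⟩ ?_).trans hB
      · apply mul_right_cancel₀ hdenom
        rw [← hAB, he]
        ring
      · rintro rfl
        simp [hA, hG₀] at hAB
  exact max_natDegree_add_max_natDegree_le u.denom_ne_zero v.denom_ne_zero
    (natDegree_le_of_mul_eq h₀ (mul_comm _ _)) (natDegree_le_of_mul_eq h₁ hsum')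
    (natDegree_le_of_mul_eq h₂ hprod')

end RatHeight

/-- The quadratic twist `ℓ z² = w³ + a w² + b w + c`, brought to Weierstrass form by
`x = ℓ w`, `y = ℓ² z`. -/
def cubicTwist {K : Type*} [Field K] (a b c ℓ : K) : WeierstrassCurve.Affine K :=
  ⟨0, a * ℓ, 0, b * ℓ ^ 2, c * ℓ ^ 3⟩

namespace cubicTwist

variable {K : Type*} [Field K] {a b c ℓ : K}

/-- The coordinate `w` of a point of `ℓ z² = w³ + a w² + b w + c`, with value `0` at infinity. -/
def abscissa : (cubicTwist a b c ℓ).Point → K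
  | .zero => 0
  | .some x _ _ => x / ℓ

/-- The coordinate `z` of a point of `ℓ z² = w³ + a w² + b w + c`, with value `0` at infinity. -/
def ordinate : (cubicTwist a b c ℓ).Point → K
  | .zero => 0
  | .some _ y _ => y / ℓ ^ 2

theorem negY_eq (x y : K) : (cubicTwist a b c ℓ).negY x y = -y := by
  simp [WeierstrassCurve.Affine.negY, cubicTwist]

@[simp]
theorem abscissa_zero : abscissa (0 : (cubicTwist a b c ℓ).Point) = 0 := rfl

@[simp]
theorem abscissa_neg (P : (cubicTwist a b c ℓ).Point) : abscissa (-P) = abscissa P := by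
  cases P <;> rfl

@[simp]
theorem ordinate_neg (P : (cubicTwist a b c ℓ).Point) : ordinate (-P) = -ordinate P := by
  cases P with
  | zero => exact neg_zero.symm
  | some x y h =>
    rw [WeierstrassCurve.Affine.Point.neg_some]
    simp only [ordinate, negY_eq, neg_div]

theorem exists_point (h2 : (2 : K) ≠ 0) (hℓ : ℓ ≠ 0) {w z : K} (hz : z ≠ 0)
    (h : ℓ * z ^ 2 = w ^ 3 + a * w ^ 2 + b * w + c) :
    ∃ P : (cubicTwist a b c ℓ).Point, P ≠ 0 ∧ abscissa P = w ∧ ordinate P = z := by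
  have hns : (cubicTwist a b c ℓ).Nonsingular (ℓ * w) (ℓ ^ 2 * z) := by
    rw [WeierstrassCurve.Affine.nonsingular_iff, WeierstrassCurve.Affine.equation_iff]
    refine ⟨?_, Or.inr fun hy => mul_ne_zero (mul_ne_zero h2 (pow_ne_zero 2 hℓ)) hz ?_⟩
    · simp only [cubicTwist]
      linear_combination ℓ ^ 3 * h
    · simp only [cubicTwist] at hy
      linear_combination hy
  refine ⟨.some _ _ hns, WeierstrassCurve.Affine.Point.some_ne_zero hns, ?_, ?_⟩
  · exact mul_div_cancel_left₀ w hℓ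
  · exact mul_div_cancel_left₀ z (pow_ne_zero 2 hℓ)

theorem equation (hℓ : ℓ ≠ 0) {P : (cubicTwist a b c ℓ).Point} (hP : P ≠ 0) :
    ℓ * ordinate P ^ 2 = abscissa P ^ 3 + a * abscissa P ^ 2 + b * abscissa P + c := by
  cases P with
  | zero => exact absurd rfl hP
  | some x y h =>
    have hxy := (WeierstrassCurve.Affine.equation_iff _ _).1 h.1
    simp only [cubicTwist] at hxy
    simp only [abscissa, ordinate]
    field_simp
    linear_combination hxy

theorem eq_or_eq_neg_of_abscissa_eq (hℓ : ℓ ≠ 0) {P Q : (cubicTwist a b c ℓ).Point} (hP : P ≠ 0)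
    (hQ : Q ≠ 0) (h : abscissa P = abscissa Q) : P = Q ∨ P = -Q := by
  cases P with
  | zero => exact absurd rfl hP
  | some x₁ y₁ h₁ =>
    cases Q with
    | zero => exact absurd rfl hQ
    | some x₂ y₂ h₂ =>
      exact WeierstrassCurve.Affine.Point.X_eq_iff.1 ((div_left_inj' hℓ).1 h)

variable [DecidableEq K]

theorem abscissa_add (hℓ : ℓ ≠ 0) {P Q : (cubicTwist a b c ℓ).Point} (hP : P ≠ 0) (hQ : Q ≠ 0)
    (h : abscissa P ≠ abscissa Q) :
    abscissa (P + Q) = ℓ * ((ordinate P - ordinate Q) / (abscissa P - abscissa Q)) ^ 2 -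
      a - abscissa P - abscissa Q := by
  cases P with
  | zero => exact absurd rfl hP
  | some x₁ y₁ h₁ =>
    cases Q with
    | zero => exact absurd rfl hQ
    | some x₂ y₂ h₂ =>
      simp only [abscissa, ordinate] at h ⊢
      have hx : x₁ ≠ x₂ := fun hx => h (by rw [hx])
      have hx' : x₁ - x₂ ≠ 0 := sub_ne_zero.2 hx
      rw [WeierstrassCurve.Affine.Point.add_of_X_ne hx]
      simp only [WeierstrassCurve.Affine.slope_of_X_ne hx, WeierstrassCurve.Affine.addX,
        cubicTwist, ← sub_div]
      field_simp
      ring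

theorem abscissa_add_add_abscissa_sub (hℓ : ℓ ≠ 0) {P Q : (cubicTwist a b c ℓ).Point}
    (hP : P ≠ 0) (hQ : Q ≠ 0) (h : abscissa P ≠ abscissa Q) :
    (abscissa (P + Q) + abscissa (P - Q)) * (abscissa P - abscissa Q) ^ 2 =
      2 * ((abscissa P + abscissa Q) * (abscissa P * abscissa Q + b) + 2 * c +
        2 * a * (abscissa P * abscissa Q)) := by
  have hw := sub_ne_zero.2 h
  rw [sub_eq_add_neg P, abscissa_add hℓ hP hQ h,
    abscissa_add hℓ hP (neg_ne_zero.2 hQ) (by rwa [abscissa_neg]), abscissa_neg, ordinate_neg]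
  field_simp
  linear_combination 2 * equation hℓ hP + 2 * equation hℓ hQ

theorem abscissa_add_mul_abscissa_sub (hℓ : ℓ ≠ 0) {P Q : (cubicTwist a b c ℓ).Point}
    (hP : P ≠ 0) (hQ : Q ≠ 0) (h : abscissa P ≠ abscissa Q) :
    abscissa (P + Q) * abscissa (P - Q) * (abscissa P - abscissa Q) ^ 2 =
      (abscissa P * abscissa Q - b) ^ 2 - 4 * c * (abscissa P + abscissa Q + a) := by
  have hw := sub_ne_zero.2 h
  rw [sub_eq_add_neg P, abscissa_add hℓ hP hQ h,
    abscissa_add hℓ hP (neg_ne_zero.2 hQ) (by rwa [abscissa_neg]), abscissa_neg, ordinate_neg]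
  rw [sub_neg_eq_add]
  set m := (ordinate P - ordinate Q) / (abscissa P - abscissa Q) with hm
  set n := (ordinate P + ordinate Q) / (abscissa P - abscissa Q) with hn
  have hmul : ℓ * (m * n) * (abscissa P - abscissa Q) = abscissa P ^ 2 +
      abscissa P * abscissa Q + abscissa Q ^ 2 + a * (abscissa P + abscissa Q) + b := by
    rw [hm, hn]
    field_simp
    linear_combination equation hℓ hP - equation hℓ hQ
  have hsq : ℓ * (m ^ 2 + n ^ 2) * (abscissa P - abscissa Q) ^ 2 =
      2 * (ℓ * ordinate P ^ 2 + ℓ * ordinate Q ^ 2) := by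
    rw [hm, hn]
    field_simp
    ring
  rw [equation hℓ hP, equation hℓ hQ] at hsq
  linear_combination (ℓ * (m * n) * (abscissa P - abscissa Q) + (abscissa P ^ 2 +
      abscissa P * abscissa Q + abscissa Q ^ 2 + a * (abscissa P + abscissa Q) + b)) * hmul -
    (a + abscissa P + abscissa Q) * hsq

theorem abscissa_add_self (h2 : (2 : K) ≠ 0) (hℓ : ℓ ≠ 0) {P : (cubicTwist a b c ℓ).Point}
    (hP : ordinate P ≠ 0) :
    abscissa (P + P) = ℓ * ((3 * abscissa P ^ 2 + 2 * a * abscissa P + b) /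
      (2 * ℓ * ordinate P)) ^ 2 - a - 2 * abscissa P := by
  cases P with
  | zero => exact absurd rfl hP
  | some x y h =>
    have hy : y ≠ 0 := fun hy => hP (by simp only [ordinate, hy, zero_div])
    have hy_ne : y ≠ (cubicTwist a b c ℓ).negY x y := by
      rw [negY_eq, Ne, eq_neg_iff_add_eq_zero, ← two_mul]
      exact mul_ne_zero h2 hy
    rw [WeierstrassCurve.Affine.Point.add_self_of_Y_ne hy_ne]
    simp only [abscissa, ordinate, WeierstrassCurve.Affine.slope_of_Y_ne rfl hy_ne,
      WeierstrassCurve.Affine.addX, negY_eq]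
    simp only [cubicTwist, sub_neg_eq_add, ← two_mul y]
    field_simp
    ring

theorem abscissa_add_self_mul (h2 : (2 : K) ≠ 0) (hℓ : ℓ ≠ 0) {P : (cubicTwist a b c ℓ).Point}
    (hP : ordinate P ≠ 0) :
    abscissa (P + P) * (4 * (abscissa P ^ 3 + a * abscissa P ^ 2 + b * abscissa P + c)) =
      (abscissa P ^ 2 - b) ^ 2 - 4 * c * (2 * abscissa P + a) := by
  have hP₀ : P ≠ 0 := by
    rintro rfl
    exact hP rfl
  rw [abscissa_add_self h2 hℓ hP]
  have hsq : ℓ * ((3 * abscissa P ^ 2 + 2 * a * abscissa P + b) / (2 * ℓ * ordinate P)) ^ 2 *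
      (4 * (ℓ * ordinate P ^ 2)) = (3 * abscissa P ^ 2 + 2 * a * abscissa P + b) ^ 2 := by
    field_simp
    ring
  rw [equation hℓ hP₀] at hsq
  linear_combination hsq

end cubicTwist

section MonicCubic

variable {F : Type*} [Field F]

/-- The polynomial `X³ + aX² + bX + c`. -/
noncomputable def monicCubic (a b c : F) : F[X] := X ^ 3 + C a * X ^ 2 + C b * X + C c

theorem natDegree_monicCubic (a b c : F) : (monicCubic a b c).natDegree = 3 := by
  unfold monicCubic
  compute_degree!

theorem monic_monicCubic (a b c : F) : (monicCubic a b c).Monic := by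
  unfold monicCubic
  monicity!

@[simp]
theorem eval_monicCubic (a b c x : F) :
    (monicCubic a b c).eval x = x ^ 3 + a * x ^ 2 + b * x + c := by
  simp [monicCubic]

theorem algebraMap_monicCubic (a b c : F) : algebraMap F[X] (RatFunc F) (monicCubic a b c) =
    RatFunc.X ^ 3 + RatFunc.C a * RatFunc.X ^ 2 + RatFunc.C b * RatFunc.X + RatFunc.C c := by
  simp [monicCubic, RatFunc.algebraMap_X, RatFunc.algebraMap_C]

end MonicCubic

section Parallelogram

open cubicTwist

variable {F : Type*} [Field F] {a b c : F} {ℓ : RatFunc F}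

local notation "𝓔" => cubicTwist (RatFunc.C a) (RatFunc.C b) (RatFunc.C c) ℓ

variable [DecidableEq (RatFunc F)]

theorem ratHeight_abscissa_add_self_le (h2 : (2 : F) ≠ 0) (hℓ : ℓ ≠ 0) {P : (𝓔).Point}
    (hX : abscissa P = RatFunc.X) (hP : ordinate P ≠ 0) :
    ratHeight (abscissa (P + P)) ≤ 4 := by
  have h2' : (2 : RatFunc F) ≠ 0 := by
    rw [← map_ofNat (RatFunc.C (K := F)), _root_.map_ne_zero]
    exact h2
  have h4 : C (2 ^ 2) * monicCubic a b c ≠ 0 :=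
    mul_ne_zero (C_ne_zero.2 (pow_ne_zero 2 h2)) (monic_monicCubic a b c).ne_zero
  have hdouble := abscissa_add_self_mul h2' hℓ hP
  rw [hX] at hdouble
  have hquot : abscissa (P + P) =
      algebraMap F[X] (RatFunc F) ((X ^ 2 - C b) ^ 2 - 4 * C c * (2 * X + C a)) /
        algebraMap F[X] (RatFunc F) (C (2 ^ 2) * monicCubic a b c) := by
    rw [eq_div_iff (RatFunc.algebraMap_ne_zero h4)]
    simp only [map_mul, map_sub, map_add, map_pow, map_ofNat, RatFunc.algebraMap_X,
      RatFunc.algebraMap_C, algebraMap_monicCubic]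
    linear_combination hdouble
  rw [hquot]
  refine ratHeight_div_le h4 ?_ ?_
  · compute_degree
  · exact (natDegree_C_mul_le _ _).trans ((natDegree_monicCubic a b c).le.trans (by omega))

theorem ratHeight_abscissa_add_add_sub_le_of_ne (hℓ : ℓ ≠ 0) {P R : (𝓔).Point} (hP : P ≠ 0)
    (hR : R ≠ 0) (hX : abscissa P = RatFunc.X) (hne : abscissa R ≠ abscissa P) :
    ratHeight (abscissa (R + P)) + ratHeight (abscissa (R - P)) ≤
      2 * ratHeight (abscissa R) + 2 := by
  have hsum := abscissa_add_add_abscissa_sub hℓ hR hP hne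
  have hprod := abscissa_add_mul_abscissa_sub hℓ hR hP hne
  rw [hX] at hne hsum hprod
  set w := abscissa R
  have hdenom := RatFunc.algebraMap_ne_zero w.denom_ne_zero
  have hnum := (div_eq_iff hdenom).1 w.num_div_denom
  have hN : w.num.natDegree ≤ ratHeight w := le_max_left _ _
  have hD : w.denom.natDegree ≤ ratHeight w := le_max_right _ _
  have hne' : w.num - X * w.denom ≠ 0 := by
    refine fun h => hne (mul_right_cancel₀ hdenom ?_)
    rw [← hnum, sub_eq_zero.1 h, map_mul, RatFunc.algebraMap_X]
  refine ratHeight_add_ratHeight_le (G₀ := (w.num - X * w.denom) ^ 2)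
    (G₁ := 2 * ((w.num + X * w.denom) * (w.num * X + C b * w.denom) +
      2 * C c * w.denom ^ 2 + 2 * C a * (w.num * X * w.denom)))
    (G₂ := (w.num * X - C b * w.denom) ^ 2 -
      4 * C c * ((w.num + X * w.denom + C a * w.denom) * w.denom))
    (pow_ne_zero 2 hne') ?_ ?_ ?_ ?_ ?_
  · simp only [map_mul, map_sub, map_add, map_pow, map_ofNat, hnum, RatFunc.algebraMap_X,
      RatFunc.algebraMap_C]
    linear_combination algebraMap F[X] (RatFunc F) w.denom ^ 2 * hsum
  · simp only [map_mul, map_sub, map_add, map_pow, map_ofNat, hnum, RatFunc.algebraMap_X,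
      RatFunc.algebraMap_C]
    linear_combination algebraMap F[X] (RatFunc F) w.denom ^ 2 * hprod
  all_goals
    compute_degree
    all_goals omega

/-- Half of the parallelogram law. -/
theorem ratHeight_abscissa_add_add_sub_le (h2 : (2 : F) ≠ 0) (hℓ : ℓ ≠ 0) {P : (𝓔).Point}
    (hX : abscissa P = RatFunc.X) (hP : ordinate P ≠ 0) (R : (𝓔).Point) :
    ratHeight (abscissa (R + P)) + ratHeight (abscissa (R - P)) ≤
      2 * ratHeight (abscissa R) + 2 := by
  have hP₀ : P ≠ 0 := by
    rintro rfl
    exact hP rfl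
  have height_zero : ratHeight (abscissa (0 : (𝓔).Point)) = 0 := by
    simp [ratHeight]
  have height_P : ratHeight (abscissa P) = 1 := by
    simp [hX, ratHeight]
  have height_two : ratHeight (abscissa (P + P)) ≤ 4 :=
    ratHeight_abscissa_add_self_le h2 hℓ hX hP
  rcases eq_or_ne R 0 with rfl | hR
  · rw [zero_add, zero_sub, abscissa_neg, height_P, height_zero]
  by_cases hne : abscissa R = abscissa P
  · rcases eq_or_eq_neg_of_abscissa_eq hℓ hR hP₀ hne with rfl | rfl
    · rw [sub_self, height_zero, height_P]
      omega
    · rw [neg_add_cancel, ← neg_add', abscissa_neg, abscissa_neg, height_zero, height_P]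
      omega
  · exact ratHeight_abscissa_add_add_sub_le_of_ne hℓ hP₀ hR hX hne

end Parallelogram

section Frobenius

open cubicTwist

variable {F : Type*} [Field F] [Fintype F]

theorem monicCubic_pow_card (a b c : F) :
    monicCubic a b c ^ Fintype.card F = (X ^ Fintype.card F) ^ 3 + C a * (X ^ Fintype.card F) ^ 2 +
      C b * X ^ Fintype.card F + C c := by
  rw [← FiniteField.expand_card]
  simp [monicCubic]

theorem natDegree_frobenius_numerator_le {m : ℕ} (hm : Fintype.card F = 2 * m + 1) (a b c : F) :
    (monicCubic a b c * (monicCubic a b c ^ m - 1) ^ 2 -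
      (C a + X + X ^ Fintype.card F) * (X ^ Fintype.card F - X) ^ 2).natDegree ≤
      2 * Fintype.card F + 1 := by
  have hpow : (2 * monicCubic a b c ^ (m + 1)).natDegree ≤ 2 * Fintype.card F + 1 := by
    refine (natDegree_mul_le_of_le (natDegree_ofNat 2).le
      (natDegree_pow_le_of_le (m + 1) (natDegree_monicCubic a b c).le)).trans ?_
    omega
  have hnum : monicCubic a b c * (monicCubic a b c ^ m - 1) ^ 2 -
      (C a + X + X ^ Fintype.card F) * (X ^ Fintype.card F - X) ^ 2 =
      X * X ^ (2 * Fintype.card F) + (X ^ 2 + 2 * C a * X + C b) * X ^ Fintype.card F +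
        C b * X + 2 * C c - 2 * monicCubic a b c ^ (m + 1) := by
    have hfrob := monicCubic_pow_card a b c
    have hq : monicCubic a b c ^ Fintype.card F =
        monicCubic a b c * (monicCubic a b c ^ m) ^ 2 := by
      rw [hm]
      ring
    have hf : monicCubic a b c = X ^ 3 + C a * X ^ 2 + C b * X + C c := rfl
    linear_combination hfrob - hq + hf
  rw [hnum]
  refine (natDegree_sub_le _ _).trans (max_le ?_ hpow)
  compute_degree
  simp only [max_le_iff]
  omega

theorem prod_X_sub_C_pow_dvd {e : F → ℕ} {p : F[X]} (h : ∀ x, (X - C x) ^ e x ∣ p) :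
    ∏ x, (X - C x) ^ e x ∣ p :=
  Finset.prod_dvd_of_coprime
    (fun _ _ _ _ hxy => (pairwise_coprime_X_sub_C Function.injective_id hxy).pow)
    fun x _ => h x

theorem natDegree_prod_X_sub_C_pow (e : F → ℕ) :
    (∏ x, (X - C x) ^ e x).natDegree = ∑ x, e x := by
  rw [natDegree_prod _ _ fun x _ => pow_ne_zero _ (X_sub_C_ne_zero x)]
  simp only [natDegree_pow, natDegree_X_sub_C, mul_one]

theorem X_sub_C_pow_dvd_X_pow_card_sub_X_sq {x : F} {n : ℕ} (hn : n ≤ 2) :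
    (X - C x) ^ n ∣ (X ^ Fintype.card F - X) ^ 2 := by
  refine (pow_dvd_pow _ hn).trans (pow_dvd_pow_of_dvd (dvd_iff_isRoot.2 ?_) 2)
  simp [FiniteField.pow_card]

theorem abscissa_frobenius_add [DecidableEq (RatFunc F)] {a b c : F}
    {P Q : (cubicTwist (RatFunc.C a) (RatFunc.C b) (RatFunc.C c)
      (algebraMap F[X] (RatFunc F) (monicCubic a b c))).Point}
    (hP : abscissa P = RatFunc.X) (hP' : ordinate P = 1)
    (hQ : abscissa Q = RatFunc.X ^ Fintype.card F)
    (hQ' : ordinate Q =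
      algebraMap F[X] (RatFunc F) (monicCubic a b c ^ (Fintype.card F / 2))) :
    abscissa (Q + P) =
      algebraMap F[X] (RatFunc F)
          (monicCubic a b c * (monicCubic a b c ^ (Fintype.card F / 2) - 1) ^ 2 -
            (C a + X + X ^ Fintype.card F) * (X ^ Fintype.card F - X) ^ 2) /
        algebraMap F[X] (RatFunc F) ((X ^ Fintype.card F - X) ^ 2) := by
  have hℓ : algebraMap F[X] (RatFunc F) (monicCubic a b c) ≠ 0 :=
    RatFunc.algebraMap_ne_zero (monic_monicCubic a b c).ne_zero
  have hV : (RatFunc.X ^ Fintype.card F - RatFunc.X : RatFunc F) ≠ 0 := by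
    simpa [RatFunc.algebraMap_X] using
      RatFunc.algebraMap_ne_zero (FiniteField.X_pow_card_sub_X_ne_zero F Fintype.one_lt_card)
  have hP₀ : P ≠ 0 := by
    rintro rfl
    exact zero_ne_one (α := RatFunc F) hP'
  have hQ₀ : Q ≠ 0 := by
    rintro rfl
    exact pow_ne_zero (M₀ := RatFunc F) _ RatFunc.X_ne_zero hQ.symm
  rw [abscissa_add hℓ hQ₀ hP₀ (by rwa [hQ, hP, ← sub_ne_zero]), hP, hP', hQ, hQ']
  simp only [map_mul, map_sub, map_add, map_pow, map_one, RatFunc.algebraMap_X,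
    RatFunc.algebraMap_C]
  field_simp
  ring

variable [DecidableEq F]

theorem quadraticChar_le_one (x : F) : quadraticChar F x ≤ 1 := by
  rcases (quadraticChar_isQuadratic (F := F)) x with h | h | h <;> simp only [h] <;> norm_num

theorem neg_one_le_quadraticChar (x : F) : -1 ≤ quadraticChar F x := by
  rcases (quadraticChar_isQuadratic (F := F)) x with h | h | h <;> simp only [h] <;> norm_num

theorem X_sub_C_pow_quadraticChar_dvd (hF : ringChar F ≠ 2) (f : F[X]) (x : F) :
    (X - C x) ^ (1 + quadraticChar F (f.eval x)).toNat ∣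
      f * (f ^ (Fintype.card F / 2) - 1) ^ 2 := by
  have hpow := quadraticChar_eq_pow_of_char_ne_two' hF (f.eval x)
  rcases eq_or_ne (f.eval x) 0 with h0 | h0
  · rw [h0, quadraticChar_zero]
    exact dvd_mul_of_dvd_left ((pow_one (X - C x)).symm ▸ dvd_iff_isRoot.2 h0) _
  rcases quadraticChar_dichotomy h0 with h | h
  · rw [h, Int.cast_one] at hpow
    rw [h]
    refine dvd_mul_of_dvd_right (pow_dvd_pow_of_dvd (dvd_iff_isRoot.2 ?_) 2) _
    rw [IsRoot.def, eval_sub, eval_pow, eval_one, ← hpow, sub_self]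
  · rw [h]
    exact one_dvd _

theorem sum_toNat_one_add_quadraticChar (g : F → F) :
    ((∑ x, (1 + quadraticChar F (g x)).toNat : ℕ) : ℤ) =
      Fintype.card F + ∑ x, quadraticChar F (g x) := by
  have hnonneg (x : F) : 0 ≤ 1 + quadraticChar F (g x) := by
    linarith [neg_one_le_quadraticChar (g x)]
  simp only [Nat.cast_sum, Int.toNat_of_nonneg (hnonneg _), sum_add_distrib, sum_const,
    card_univ, nsmul_one]

variable [DecidableEq (RatFunc F)]

-- In the addition formula the factor `(X - x) ^ (1 + χ (f x))` cancels for each `x`.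
theorem ratHeight_abscissa_frobenius_add_le (hF : ringChar F ≠ 2) {a b c : F}
    {P Q : (cubicTwist (RatFunc.C a) (RatFunc.C b) (RatFunc.C c)
      (algebraMap F[X] (RatFunc F) (monicCubic a b c))).Point}
    (hP : abscissa P = RatFunc.X) (hP' : ordinate P = 1)
    (hQ : abscissa Q = RatFunc.X ^ Fintype.card F)
    (hQ' : ordinate Q =
      algebraMap F[X] (RatFunc F) (monicCubic a b c ^ (Fintype.card F / 2))) :
    (ratHeight (abscissa (Q + P)) : ℤ) ≤
      Fintype.card F + 1 - ∑ x, quadraticChar F (x ^ 3 + a * x ^ 2 + b * x + c) := by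
  set G := ∏ x, (X - C x) ^ (1 + quadraticChar F ((monicCubic a b c).eval x)).toNat with hG
  have hq : 1 < Fintype.card F := Fintype.one_lt_card
  have hGV : G ∣ (X ^ Fintype.card F - X) ^ 2 :=
    prod_X_sub_C_pow_dvd fun x => X_sub_C_pow_dvd_X_pow_card_sub_X_sq (by
      have := quadraticChar_le_one ((monicCubic a b c).eval x)
      omega)
  have hGU : G ∣ monicCubic a b c * (monicCubic a b c ^ (Fintype.card F / 2) - 1) ^ 2 -
      (C a + X + X ^ Fintype.card F) * (X ^ Fintype.card F - X) ^ 2 :=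
    dvd_sub (prod_X_sub_C_pow_dvd (X_sub_C_pow_quadraticChar_dvd hF _)) (hGV.mul_left _)
  have hG_deg : (G.natDegree : ℤ) =
      Fintype.card F + ∑ x, quadraticChar F (x ^ 3 + a * x ^ 2 + b * x + c) := by
    rw [hG, natDegree_prod_X_sub_C_pow, sum_toNat_one_add_quadraticChar]
    simp only [eval_monicCubic]
  have hU_deg := natDegree_frobenius_numerator_le (m := Fintype.card F / 2)
    (by have := FiniteField.odd_card_of_char_ne_two hF; omega) a b c
  have hV_deg : ((X ^ Fintype.card F - X : F[X]) ^ 2).natDegree = 2 * Fintype.card F := by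
    rw [natDegree_pow, FiniteField.X_pow_card_sub_X_natDegree_eq F hq]
  have hheight := ratHeight_div_add_natDegree_le
    (pow_ne_zero 2 (FiniteField.X_pow_card_sub_X_ne_zero F hq)) hGU hGV
  rw [abscissa_frobenius_add hP hP' hQ hQ']
  omega

end Frobenius

section Hasse

open cubicTwist

theorem le_of_second_difference_le {g : ℕ → ℤ} {q A : ℤ} (h0 : g 0 = q) (h1 : g 1 ≤ q + 1 - A)
    (h : ∀ n, g (n + 2) + g n ≤ 2 * g (n + 1) + 2) (n : ℕ) : g n ≤ n ^ 2 - n * A + q := by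
  have hstep (n : ℕ) : g (n + 1) - g n ≤ 2 * n + 1 - A := by
    induction n with
    | zero => simp only [zero_add, h0]; push_cast; linarith
    | succ k ih => have := h k; push_cast; linarith
  induction n with
  | zero => simp [h0]
  | succ k ih => have := hstep k; push_cast; nlinarith

theorem sq_le_of_forall_nat_sub_add_nonneg {q A : ℤ} (hq : Odd q) (hA : 0 ≤ A)
    (h : ∀ n : ℕ, 0 ≤ (n : ℤ) ^ 2 - n * A + q) : A ^ 2 ≤ 4 * q := by
  lift A to ℕ using hA
  rcases Nat.even_or_odd' A with ⟨k, rfl | rfl⟩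
  · have := h k
    push_cast at this ⊢
    nlinarith
  · have hk := h k
    have hne : (k : ℤ) ^ 2 - k * (2 * k + 1 : ℕ) + q ≠ 0 := by
      intro h0
      have hq' : q = k * (k + 1) := by
        push_cast at h0
        linear_combination h0
      exact Int.not_even_iff_odd.2 hq (hq' ▸ Int.even_mul_succ_self k)
    have : 1 ≤ (k : ℤ) ^ 2 - k * (2 * k + 1 : ℕ) + q := lt_of_le_of_ne hk hne.symm
    push_cast at this ⊢
    nlinarith

variable {F : Type*} [Field F] [Fintype F] [DecidableEq F]

theorem nonneg_sq_sub_mul_sum_add_card (hF : ringChar F ≠ 2) (a b c : F) (n : ℕ) :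
    0 ≤ (n : ℤ) ^ 2 - n * ∑ x, quadraticChar F (x ^ 3 + a * x ^ 2 + b * x + c) +
      Fintype.card F := by
  classical
  set ℓ := algebraMap F[X] (RatFunc F) (monicCubic a b c) with hℓ_def
  have hℓ : ℓ ≠ 0 := RatFunc.algebraMap_ne_zero (monic_monicCubic a b c).ne_zero
  have h2 : (2 : F) ≠ 0 := Ring.two_ne_zero hF
  have h2' : (2 : RatFunc F) ≠ 0 := by
    rw [← map_ofNat (RatFunc.C (K := F)), _root_.map_ne_zero]
    exact h2
  obtain ⟨P, -, hP, hP'⟩ := exists_point (a := RatFunc.C a) (b := RatFunc.C b) (c := RatFunc.C c)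
    h2' hℓ (w := RatFunc.X) (z := 1) one_ne_zero (by
      rw [hℓ_def, algebraMap_monicCubic]
      ring)
  obtain ⟨Q, -, hQ, hQ'⟩ := exists_point (a := RatFunc.C a) (b := RatFunc.C b) (c := RatFunc.C c)
    h2' hℓ (w := RatFunc.X ^ Fintype.card F)
    (z := algebraMap F[X] (RatFunc F) (monicCubic a b c ^ (Fintype.card F / 2)))
    (by rw [map_pow]; exact pow_ne_zero _ hℓ) (by
      have hodd : Fintype.card F = 2 * (Fintype.card F / 2) + 1 := by
        have := FiniteField.odd_card_of_char_ne_two hF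
        omega
      have hfrob := congrArg (algebraMap F[X] (RatFunc F)) (monicCubic_pow_card a b c)
      simp only [map_add, map_mul, map_pow, RatFunc.algebraMap_X, RatFunc.algebraMap_C] at hfrob
      rw [← hfrob, map_pow, ← pow_mul, ← pow_succ', mul_comm, ← hodd])
  have hQ_height : ratHeight (abscissa Q) = Fintype.card F := by
    rw [hQ, ← RatFunc.algebraMap_X, ← map_pow, ratHeight_algebraMap, natDegree_X_pow]
  have hstep (k : ℕ) : (ratHeight (abscissa (Q + (k + 2) • P)) : ℤ) +
      ratHeight (abscissa (Q + k • P)) ≤ 2 * ratHeight (abscissa (Q + (k + 1) • P)) + 2 := by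
    have := ratHeight_abscissa_add_add_sub_le h2 hℓ hP (hP' ▸ one_ne_zero) (Q + (k + 1) • P)
    rw [show Q + (k + 1) • P + P = Q + (k + 2) • P by rw [add_assoc, ← succ_nsmul],
      show Q + (k + 1) • P - P = Q + k • P by rw [succ_nsmul]; abel] at this
    exact_mod_cast this
  have hQP := ratHeight_abscissa_frobenius_add_le hF hP hP' hQ hQ'
  exact (Int.natCast_nonneg _).trans (le_of_second_difference_le
    (g := fun n => (ratHeight (abscissa (Q + n • P)) : ℤ))
    (by simp [hQ_height]) (by simpa using hQP) hstep n)

theorem quadraticChar_sq_mul {z : F} (hz : z ≠ 0) (x : F) :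
    quadraticChar F (z ^ 2 * x) = quadraticChar F x := by
  rw [map_mul, quadraticChar_sq_one' hz, one_mul]

theorem sum_quadraticChar_cubic_twist (a b c : F) {d : F} (hd : d ≠ 0) :
    ∑ x, quadraticChar F (x ^ 3 + a * d * x ^ 2 + b * d ^ 2 * x + c * d ^ 3) =
      quadraticChar F d * ∑ x, quadraticChar F (x ^ 3 + a * x ^ 2 + b * x + c) := by
  rw [mul_sum]
  refine (Fintype.sum_equiv (Equiv.mulLeft₀ d hd) _ _ fun x => ?_).symm
  have hd' : quadraticChar F d = quadraticChar F (d ^ 3) := by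
    rw [pow_succ, map_mul, quadraticChar_sq_one' hd, one_mul]
  rw [hd', ← map_mul]
  simp only [Equiv.mulLeft₀_apply]
  ring_nf

/-- **Hasse's bound**. -/
theorem sq_sum_quadraticChar_cubic_le (hF : ringChar F ≠ 2) (a b c : F) :
    (∑ x, quadraticChar F (x ^ 3 + a * x ^ 2 + b * x + c)) ^ 2 ≤ 4 * Fintype.card F := by
  have hodd : Odd (Fintype.card F : ℤ) := by
    have := FiniteField.odd_card_of_char_ne_two hF
    exact_mod_cast Nat.odd_iff.2 this
  rcases le_total 0 (∑ x, quadraticChar F (x ^ 3 + a * x ^ 2 + b * x + c)) with h | h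
  · exact sq_le_of_forall_nat_sub_add_nonneg hodd h (nonneg_sq_sub_mul_sum_add_card hF a b c)
  · obtain ⟨d, hd⟩ := quadraticChar_exists_neg_one hF
    have hd₀ : d ≠ 0 := by
      rintro rfl
      simp at hd
    have htwist := sum_quadraticChar_cubic_twist a b c hd₀
    rw [hd, neg_one_mul] at htwist
    rw [← neg_sq, ← htwist]
    exact sq_le_of_forall_nat_sub_add_nonneg hodd (by linarith)
      (nonneg_sq_sub_mul_sum_add_card hF _ _ _)

/-- The integer part `⌊2√q⌋` of the Hasse bound, where `q` is the number of elements of `F`. -/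
def hasseBound (F : Type*) [Fintype F] : ℤ := Nat.sqrt (4 * Fintype.card F)

theorem hasseBound_nonneg (F : Type*) [Fintype F] : 0 ≤ hasseBound F := Int.natCast_nonneg _

theorem hasseBound_sq_le (F : Type*) [Fintype F] : hasseBound F ^ 2 ≤ 4 * Fintype.card F := by
  unfold hasseBound
  exact_mod_cast Nat.sqrt_le' (4 * Fintype.card F)

theorem abs_sum_quadraticChar_cubic_le (hF : ringChar F ≠ 2) {k : F} (hk : k ≠ 0) (a b c : F) :
    |∑ x, quadraticChar F (k * x ^ 3 + a * x ^ 2 + b * x + c)| ≤ hasseBound F := by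
  have hmonic : ∑ x, quadraticChar F (k * x ^ 3 + a * x ^ 2 + b * x + c) =
      ∑ x, quadraticChar F (x ^ 3 + a * x ^ 2 + b * k * x + c * k ^ 2) := by
    refine Fintype.sum_equiv (Equiv.mulLeft₀ k hk) _ _ fun x => ?_
    rw [← quadraticChar_sq_mul hk]
    simp only [Equiv.mulLeft₀_apply]
    ring_nf
  rw [hmonic]
  unfold hasseBound
  rw [Int.abs_eq_natAbs, Nat.cast_le, Nat.le_sqrt', ← Nat.cast_le (α := ℤ)]
  push_cast
  rw [sq_abs]
  exact sq_sum_quadraticChar_cubic_le hF _ _ _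

end Hasse

section QuadraticSums

variable {F : Type*} [Field F] [Fintype F]

theorem sum_eq_sum_add_inv {M : Type*} [AddCommMonoid M] (r : F) (φ : F → M) :
    ∑ x, φ x = ∑ z, φ (r + z⁻¹) :=
  (Fintype.sum_equiv ((Equiv.inv F).trans (Equiv.addLeft r)) _ _ fun z => by simp).symm

variable [DecidableEq F]

theorem sum_quadraticChar_linear (hF : ringChar F ≠ 2) {a : F} (ha : a ≠ 0) (b : F) :
    ∑ x, quadraticChar F (a * x + b) = 0 := by
  rw [← quadraticChar_sum_zero hF]
  exact Fintype.sum_equiv ((Equiv.mulLeft₀ a ha).trans (Equiv.addRight b)) _ _ fun x => by simp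

theorem sum_quadraticChar_sub_mul_sub (hF : ringChar F ≠ 2) {a b : F} (hab : a ≠ b) :
    ∑ x, quadraticChar F ((x - a) * (x - b)) = -1 := by
  have hinv (z : F) : quadraticChar F ((a + z⁻¹ - a) * (a + z⁻¹ - b)) =
      quadraticChar F ((a - b) * z + 1) - if z = 0 then 1 else 0 := by
    rcases eq_or_ne z 0 with rfl | hz
    · simp
    · rw [← quadraticChar_sq_mul hz, if_neg hz, sub_zero]
      congr 1
      field_simp
      ring
  rw [sum_eq_sum_add_inv a, sum_congr rfl fun z _ => hinv z, sum_sub_distrib,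
    sum_quadraticChar_linear hF (sub_ne_zero.2 hab)]
  simp

theorem abs_sum_quadraticChar_quartic_le (hF : ringChar F ≠ 2) {r a b c : F}
    (hr : r ^ 3 + a * r ^ 2 + b * r + c ≠ 0) :
    |∑ x, quadraticChar F ((x - r) * (x ^ 3 + a * x ^ 2 + b * x + c))| ≤ hasseBound F + 1 := by
  have hinv (z : F) : quadraticChar F ((r + z⁻¹ - r) *
      ((r + z⁻¹) ^ 3 + a * (r + z⁻¹) ^ 2 + b * (r + z⁻¹) + c)) =
      quadraticChar F ((r ^ 3 + a * r ^ 2 + b * r + c) * z ^ 3 +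
        (3 * r ^ 2 + 2 * a * r + b) * z ^ 2 + (3 * r + a) * z + 1) - if z = 0 then 1 else 0 := by
    rcases eq_or_ne z 0 with rfl | hz
    · simp
    · rw [← quadraticChar_sq_mul (pow_ne_zero 2 hz), if_neg hz, sub_zero]
      congr 1
      field_simp
      ring
  rw [sum_eq_sum_add_inv r, sum_congr rfl fun z _ => hinv z, sum_sub_distrib]
  simp only [sum_ite_eq', mem_univ, if_true]
  exact (abs_sub _ _).trans
    (add_le_add (abs_sum_quadraticChar_cubic_le hF hr _ _ _) abs_one.le)

theorem card_quadratic_roots (hF : ringChar F ≠ 2) {k : F} (hk : k ≠ 0) (b c : F) :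
    (#{x | k * x ^ 2 + b * x + c = 0} : ℤ) = 1 + quadraticChar F (b ^ 2 - 4 * k * c) := by
  have h2 : (2 : F) ≠ 0 := Ring.two_ne_zero hF
  rw [add_comm, ← quadraticChar_card_sqrts hF, Nat.cast_inj]
  refine card_equiv ((Equiv.mulLeft₀ (2 * k) (mul_ne_zero h2 hk)).trans (Equiv.addRight b))
    fun x => ?_
  have hsq : (2 * k * x + b) ^ 2 - (b ^ 2 - 4 * k * c) =
      2 * 2 * k * (k * x ^ 2 + b * x + c) := by ring
  simp only [mem_filter, mem_univ, true_and, Equiv.trans_apply, Equiv.mulLeft₀_apply,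
    Equiv.coe_addRight, Set.mem_toFinset, Set.mem_ofPred_eq]
  rw [← sub_eq_zero (b := b ^ 2 - 4 * k * c), hsq, mul_eq_zero,
    or_iff_right (mul_ne_zero (mul_ne_zero h2 h2) hk)]

theorem sum_comp_quadratic (hF : ringChar F ≠ 2) {k : F} (hk : k ≠ 0) (b c : F) (φ : F → ℤ) :
    ∑ x, φ (k * x ^ 2 + b * x + c) =
      ∑ s, φ s + ∑ s, φ s * quadraticChar F (4 * k * s + (b ^ 2 - 4 * k * c)) := by
  rw [← sum_fiberwise' univ (fun x : F => k * x ^ 2 + b * x + c) φ, ← sum_add_distrib]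
  refine sum_congr rfl fun s _ => ?_
  have hcard := card_quadratic_roots hF hk b (c - s)
  simp only [← add_sub_assoc, sub_eq_zero] at hcard
  rw [sum_const, nsmul_eq_mul, hcard]
  ring_nf

theorem sum_comp_add_div (hF : ringChar F ≠ 2) {d : F} (hd : d ≠ 0) (φ : F → ℤ) :
    ∑ x with x ≠ 0, φ (x + d / x) = ∑ v, φ v + ∑ v, φ v * quadraticChar F (v ^ 2 - 4 * d) := by
  rw [← sum_fiberwise' _ (fun x : F => x + d / x) φ, ← sum_add_distrib]
  refine sum_congr rfl fun v _ => ?_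
  have hfiber (x : F) : 1 * x ^ 2 + -v * x + d = 0 ↔ x ≠ 0 ∧ x + d / x = v := by
    rcases eq_or_ne x 0 with rfl | hx
    · simp [hd]
    · rw [and_iff_right hx]
      field_simp
      constructor <;> intro h <;> linear_combination h
  have hcard := card_quadratic_roots hF one_ne_zero (-v) d
  simp only [hfiber] at hcard
  rw [filter_filter, sum_const, nsmul_eq_mul, hcard]
  ring_nf

theorem sum_quadraticChar_quadratic (hF : ringChar F ≠ 2) {b c : F} (h : b ^ 2 - 4 * c ≠ 0) :
    ∑ x, quadraticChar F (x ^ 2 + b * x + c) = -1 := by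
  have h2 : (2 : F) ≠ 0 := Ring.two_ne_zero hF
  have hterm (s : F) : quadraticChar F s * quadraticChar F (4 * 1 * s + (b ^ 2 - 4 * 1 * c)) =
      quadraticChar F ((s - 0) * (s - (4 * c - b ^ 2) / 2 ^ 2)) := by
    rw [← map_mul, ← quadraticChar_sq_mul h2 ((s - 0) * _)]
    congr 1
    field_simp
    ring
  have hne : (0 : F) ≠ (4 * c - b ^ 2) / 2 ^ 2 :=
    (div_ne_zero (by rwa [← neg_sub, neg_ne_zero]) (pow_ne_zero 2 h2)).symm
  simpa only [one_mul, quadraticChar_sum_zero hF, zero_add, hterm,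
    sum_quadraticChar_sub_mul_sub hF hne] using
    sum_comp_quadratic hF one_ne_zero b c (quadraticChar F)

theorem sum_quadraticChar_quadratic_roots (hF : ringChar F ≠ 2) {s : F} (hs : s ≠ 0) (v : F) :
    ∑ x with x ^ 2 - v * x + s ^ 2 = 0, quadraticChar F x =
      quadraticChar F (v + 2 * s) + quadraticChar F (v - 2 * s) := by
  have h2 : (2 : F) ≠ 0 := Ring.two_ne_zero hF
  rcases eq_or_ne (v + 2 * s) 0 with hv | hv
  · obtain rfl : v = -2 * s := by linear_combination hv
    have hroot : ({x | x ^ 2 - -2 * s * x + s ^ 2 = 0} : Finset F) = {-s} := by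
      ext x
      rw [mem_filter_univ, mem_singleton, eq_neg_iff_add_eq_zero,
        show x ^ 2 - -2 * s * x + s ^ 2 = (x + s) ^ 2 by ring, sq_eq_zero_iff]
    rw [hroot, sum_singleton, hv, quadraticChar_zero, zero_add,
      show -2 * s - 2 * s = 2 ^ 2 * -s by ring, quadraticChar_sq_mul h2]
  · have hroot (x : F) (hx : x ^ 2 - v * x + s ^ 2 = 0) :
        quadraticChar F x = quadraticChar F (v + 2 * s) := by
      have hprod : (v + 2 * s) * x = (x + s) ^ 2 := by linear_combination -hx
      have hxs : x + s ≠ 0 := by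
        intro h
        obtain rfl : x = -s := eq_neg_of_add_eq_zero_left h
        exact mul_ne_zero hs hv (by linear_combination hx)
      rw [← quadraticChar_sq_mul hv x, ← quadraticChar_sq_mul hxs (v + 2 * s), ← hprod]
      ring_nf
    rw [sum_congr rfl fun x hx => hroot x ((mem_filter_univ x).1 hx), sum_const, nsmul_eq_mul]
    have hcard := card_quadratic_roots hF one_ne_zero (-v) (s ^ 2)
    simp only [one_mul, neg_mul, ← sub_eq_add_neg] at hcard
    rw [hcard, show (-v) ^ 2 - 4 * 1 * s ^ 2 = (v + 2 * s) * (v - 2 * s) by ring, map_mul]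
    linear_combination quadraticChar F (v - 2 * s) * quadraticChar_sq_one hv

theorem sum_quadraticChar_mul_comp_add_div (hF : ringChar F ≠ 2) {s : F} (hs : s ≠ 0)
    (φ : F → ℤ) :
    ∑ x, quadraticChar F x * φ (x + s ^ 2 / x) =
      ∑ v, (quadraticChar F (v + 2 * s) + quadraticChar F (v - 2 * s)) * φ v := by
  have hfiber (x v : F) (hx : x ≠ 0) : x ^ 2 - v * x + s ^ 2 = 0 ↔ v = x + s ^ 2 / x := by
    field_simp
    constructor <;> intro h <;> linear_combination -h
  have hterm (x : F) : quadraticChar F x * φ (x + s ^ 2 / x) =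
      ∑ v, if x ^ 2 - v * x + s ^ 2 = 0 then quadraticChar F x * φ v else 0 := by
    rcases eq_or_ne x 0 with rfl | hx
    · simp [hs]
    · simp only [hfiber x _ hx, sum_ite_eq', mem_univ, if_true]
  rw [sum_congr rfl fun x _ => hterm x, sum_comm]
  refine sum_congr rfl fun v _ => ?_
  rw [← sum_filter, ← sum_mul, sum_quadraticChar_quadratic_roots hF hs]

theorem sum_quadraticChar_pow_five_sub_eq_zero {i : F} (hi : i ^ 2 = -1)
    (h : quadraticChar F i = -1) : ∑ x, quadraticChar F (x ^ 5 - x) = 0 := by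
  have hi0 : i ≠ 0 := by
    rintro rfl
    simp at h
  have hneg : ∑ x, quadraticChar F (x ^ 5 - x) = ∑ x, -quadraticChar F (x ^ 5 - x) := by
    refine (Fintype.sum_equiv (Equiv.mulLeft₀ i hi0) _ _ fun x => ?_).symm
    rw [← neg_one_mul, ← h, ← map_mul, Equiv.mulLeft₀_apply]
    congr 1
    linear_combination (i - i ^ 3) * x ^ 5 * hi
  rw [sum_neg_distrib] at hneg
  exact self_eq_neg.1 hneg

-- With `s² = i` one has `x⁵ - x = x³ ((x + s² / x)² - 2 s²)`: this genus 2 curve covers two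
-- elliptic curves.
theorem abs_sum_quadraticChar_pow_five_sub_le_of_pow_four (hF : ringChar F ≠ 2) {s : F}
    (hs : s ^ 4 = -1) : |∑ x, quadraticChar F (x ^ 5 - x)| ≤ 2 * hasseBound F := by
  have hs0 : s ≠ 0 := by
    rintro rfl
    simp at hs
  have hterm (x : F) : quadraticChar F (x ^ 5 - x) =
      quadraticChar F x * quadraticChar F ((x + s ^ 2 / x) ^ 2 - 2 * s ^ 2) := by
    rcases eq_or_ne x 0 with rfl | hx
    · simp
    rw [← map_mul, ← quadraticChar_sq_mul hx (x * _)]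
    congr 1
    field_simp
    linear_combination -hs
  have hsplit (v : F) : (quadraticChar F (v + 2 * s) + quadraticChar F (v - 2 * s)) *
      quadraticChar F (v ^ 2 - 2 * s ^ 2) =
      quadraticChar F (1 * v ^ 3 + 2 * s * v ^ 2 + -2 * s ^ 2 * v + -4 * s ^ 3) +
      quadraticChar F (1 * v ^ 3 + -2 * s * v ^ 2 + -2 * s ^ 2 * v + 4 * s ^ 3) := by
    rw [add_mul, ← map_mul, ← map_mul]
    congr 2 <;> ring
  rw [sum_congr rfl fun x _ => hterm x,
    sum_quadraticChar_mul_comp_add_div hF hs0 (fun v => quadraticChar F (v ^ 2 - 2 * s ^ 2)),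
    sum_congr rfl fun v _ => hsplit v, sum_add_distrib, two_mul (hasseBound F)]
  exact (abs_add_le _ _).trans (add_le_add (abs_sum_quadraticChar_cubic_le hF one_ne_zero _ _ _)
    (abs_sum_quadraticChar_cubic_le hF one_ne_zero _ _ _))

theorem abs_sum_quadraticChar_pow_five_sub_le (hF : ringChar F ≠ 2) {i : F} (hi : i ^ 2 = -1) :
    |∑ x, quadraticChar F (x ^ 5 - x)| ≤ 2 * hasseBound F := by
  have hi0 : i ≠ 0 := by
    rintro rfl
    simp at hi
  rcases quadraticChar_dichotomy hi0 with h | h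
  · obtain ⟨s, rfl⟩ := (quadraticChar_one_iff_isSquare hi0).1 h
    exact abs_sum_quadraticChar_pow_five_sub_le_of_pow_four hF (by rw [← hi]; ring)
  · rw [sum_quadraticChar_pow_five_sub_eq_zero hi h, abs_zero]
    exact mul_nonneg zero_le_two (hasseBound_nonneg F)

end QuadraticSums

section ShiftSieve

variable {G : Type*} [Sub G]

/-- The combination, with coefficients `w k`, of the elementary symmetric polynomials in the values
`φ (x - a)` for `a ∈ T`: a sieve weight that is positive only where these values have a prescribed
pattern. -/
def shiftWeight (w : ℕ → ℤ) (φ : G → ℤ) (T : Finset G) (x : G) : ℤ :=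
  ∑ S ∈ T.powerset, w #S * ∏ a ∈ S, φ (x - a)

variable [Fintype G]

/-- The correlation sum of the translates of `φ` by the elements of `S`. -/
def shiftCorr (φ : G → ℤ) (S : Finset G) : ℤ := ∑ x, ∏ a ∈ S, φ (x - a)

theorem exists_notMem_shiftWeight_pos {w L : ℕ → ℤ} {φ : G → ℤ} {T : Finset G} {M : ℤ}
    (hL : ∀ S ⊆ T, L #S ≤ w #S * shiftCorr φ S) (hM : ∀ x ∈ T, shiftWeight w φ T x ≤ M)
    (h : #T * M < ∑ k ∈ range (#T + 1), (#T).choose k • L k) :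
    ∃ x ∉ T, 0 < shiftWeight w φ T x := by
  classical
  by_contra! hle
  refine h.not_ge ?_
  calc ∑ k ∈ range (#T + 1), (#T).choose k • L k
      = ∑ S ∈ T.powerset, L #S := (sum_powerset_apply_card L).symm
    _ ≤ ∑ S ∈ T.powerset, w #S * shiftCorr φ S :=
      sum_le_sum fun S hS => hL S (mem_powerset.1 hS)
    _ = ∑ x, shiftWeight w φ T x := by
      simp only [shiftCorr, shiftWeight, mul_sum]
      exact sum_comm
    _ = ∑ x ∈ T, shiftWeight w φ T x + ∑ x ∈ Tᶜ, shiftWeight w φ T x :=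
      (sum_add_sum_compl _ _).symm
    _ ≤ #T * M + 0 := by
      refine add_le_add ?_ (sum_nonpos fun x hx => hle x (mem_compl.1 hx))
      simpa only [nsmul_eq_mul] using sum_le_card_nsmul _ _ _ hM
    _ = #T * M := add_zero _

end ShiftSieve

section QuadraticSieve

variable {F : Type*} [Field F] [Fintype F] [DecidableEq F]

theorem shiftCorr_quadraticChar_eq_zero (hF : ringChar F ≠ 2) {S : Finset F} (hS : #S = 1) :
    shiftCorr (quadraticChar F) S = 0 := by
  obtain ⟨a, rfl⟩ := card_eq_one.1 hS
  simpa [shiftCorr, sub_eq_add_neg] using sum_quadraticChar_linear hF one_ne_zero (-a)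

theorem shiftCorr_quadraticChar_eq_neg_one (hF : ringChar F ≠ 2) {S : Finset F} (hS : #S = 2) :
    shiftCorr (quadraticChar F) S = -1 := by
  obtain ⟨a, b, hab, rfl⟩ := card_eq_two.1 hS
  simp only [shiftCorr, prod_pair hab, ← map_mul, sum_quadraticChar_sub_mul_sub hF hab]

theorem abs_shiftCorr_quadraticChar_le (hF : ringChar F ≠ 2) {S : Finset F} (hS : #S = 3) :
    |shiftCorr (quadraticChar F) S| ≤ hasseBound F := by
  obtain ⟨a, b, c, hab, hac, hbc, rfl⟩ := card_eq_three.1 hS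
  convert abs_sum_quadraticChar_cubic_le hF one_ne_zero (-a - b - c) (a * b + a * c + b * c)
    (-a * b * c) using 2
  refine sum_congr rfl fun x _ => ?_
  rw [prod_insert (by simp [hab, hac]), prod_pair hbc, ← map_mul, ← map_mul]
  ring_nf

theorem abs_shiftCorr_quadraticChar_le_add_one (hF : ringChar F ≠ 2) {S : Finset F}
    (hS : #S = 4) : |shiftCorr (quadraticChar F) S| ≤ hasseBound F + 1 := by
  obtain ⟨r, S, hr, rfl, hS'⟩ := card_eq_succ.1 hS
  obtain ⟨a, b, c, hab, hac, hbc, rfl⟩ := card_eq_three.1 hS'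
  have hne : r ^ 3 + (-a - b - c) * r ^ 2 + (a * b + a * c + b * c) * r + -a * b * c ≠ 0 := by
    rw [show r ^ 3 + (-a - b - c) * r ^ 2 + (a * b + a * c + b * c) * r + -a * b * c =
      (r - a) * ((r - b) * (r - c)) by ring]
    simp only [mem_insert, mem_singleton, not_or] at hr
    exact mul_ne_zero (sub_ne_zero.2 hr.1)
      (mul_ne_zero (sub_ne_zero.2 hr.2.1) (sub_ne_zero.2 hr.2.2))
  convert abs_sum_quadraticChar_quartic_le hF hne using 2
  refine sum_congr rfl fun x _ => ?_
  rw [prod_insert hr, prod_insert (by simp [hab, hac]), prod_pair hbc, ← map_mul, ← map_mul,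
    ← map_mul]
  ring_nf

theorem shiftWeight_quadraticChar (T : Finset F) (x : F) :
    shiftWeight (fun k => (-1) ^ k) (quadraticChar F) T x =
      ∏ a ∈ T, (1 - quadraticChar F (x - a)) := by
  simp only [shiftWeight, sub_eq_add_neg (1 : ℤ), prod_one_add, prod_neg]

theorem shiftWeight_quadraticChar_le (T : Finset F) (x : F) :
    shiftWeight (fun k => (-1) ^ k) (quadraticChar F) T x ≤ 2 ^ #T := by
  rw [shiftWeight_quadraticChar, ← prod_const]
  exact prod_le_prod (fun a _ => by linarith [quadraticChar_le_one (x - a)])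
    fun a _ => by linarith [neg_one_le_quadraticChar (x - a)]

theorem exists_forall_quadraticChar_sub_eq_neg_one (hF : ringChar F ≠ 2) {T : Finset F}
    (hT : #T ≤ 5) (hT' : #T = 5 → shiftCorr (quadraticChar F) T ≤ 2 * hasseBound F)
    (hq : 17 * hasseBound F + 175 < Fintype.card F) :
    ∃ x, ∀ a ∈ T, quadraticChar F (x - a) = -1 := by
  set L : ℕ → ℤ := fun
    | 0 => Fintype.card F
    | 1 => 0
    | 2 => -1
    | 3 => -hasseBound F
    | 4 => -(hasseBound F + 1)
    | _ => -(2 * hasseBound F) with hL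
  have hcorr (S : Finset F) (hS : S ⊆ T) : L #S ≤ (-1) ^ #S * shiftCorr (quadraticChar F) S := by
    have hcard : #S ≤ 5 := (card_le_card hS).trans hT
    interval_cases h : #S <;> simp only [hL]
    · simp [card_eq_zero.1 h, shiftCorr]
    · simp [shiftCorr_quadraticChar_eq_zero hF h]
    · simp [shiftCorr_quadraticChar_eq_neg_one hF h]
    · linarith [abs_le.1 (abs_shiftCorr_quadraticChar_le hF h)]
    · linarith [abs_le.1 (abs_shiftCorr_quadraticChar_le_add_one hF h)]
    · obtain rfl : S = T := eq_of_subset_of_card_le hS (h ▸ hT)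
      linarith [hT' h]
  have h0 := hasseBound_nonneg F
  have hsum : #T * 2 ^ #T < ∑ k ∈ range (#T + 1), (#T).choose k • L k := by
    interval_cases #T <;> simp [sum_range_succ, hL, Nat.choose] <;> linarith
  obtain ⟨x, hx, hpos⟩ :=
    exists_notMem_shiftWeight_pos hcorr (fun x _ => shiftWeight_quadraticChar_le T x) hsum
  rw [shiftWeight_quadraticChar] at hpos
  refine ⟨x, fun a ha => ?_⟩
  have hxa : x - a ≠ 0 := sub_ne_zero.2 fun h => hx (h ▸ ha)
  refine (quadraticChar_dichotomy hxa).resolve_left fun h => ?_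
  exact prod_ne_zero_iff.1 hpos.ne' a ha (by rw [h, sub_self])

end QuadraticSieve

section CubicTrace

variable {F : Type*} [Field F] [Fintype F]

theorem card_units_pow_eq_one [DecidableEq F] (d : ℕ) :
    #{x : Fˣ | x ^ d = 1} = (Fintype.card F - 1).gcd d := by
  rw [← Nat.card_eq_fintype_card (α := F), ← Nat.card_units, ← IsCyclic.card_powMonoidHom_ker Fˣ d,
    Nat.card_eq_fintype_card, ← Fintype.card_subtype]
  exact Fintype.card_congr (Equiv.subtypeEquivRight fun _ => Iff.rfl)

theorem card_pow_eq_pow [DecidableEq F] {d : ℕ} (hd : d ≠ 0) (w : Fˣ) :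
    #{y : F | y ^ d = (w : F) ^ d} = (Fintype.card F - 1).gcd d := by
  rw [← card_units_pow_eq_one]
  refine (card_bij (fun (ζ : Fˣ) _ => (w * ζ : F)) ?_ ?_ ?_).symm
  · intro ζ hζ
    rw [mem_filter_univ] at hζ ⊢
    rw [mul_pow, ← Units.val_pow_eq_pow_val ζ, hζ, Units.val_one, mul_one]
  · exact fun ζ _ ζ' _ h => Units.ext (mul_left_cancel₀ w.ne_zero h)
  · intro y hy
    rw [mem_filter_univ] at hy
    have hy0 : y ≠ 0 := ne_zero_pow hd (hy ▸ pow_ne_zero d w.ne_zero)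
    refine ⟨w⁻¹ * Units.mk0 y hy0, ?_, by simp⟩
    rw [mem_filter_univ, mul_pow]
    ext
    simp [hy]

theorem range_powMonoidHom_eq_ker {d m : ℕ} (h : Fintype.card F - 1 = d * m) :
    (powMonoidHom d : Fˣ →* Fˣ).range = (powMonoidHom m).ker := by
  have hcard : Nat.card Fˣ = d * m := by rw [Nat.card_units, Nat.card_eq_fintype_card, h]
  have hpos : 0 < d * m := hcard ▸ Nat.card_pos
  refine Subgroup.eq_of_le_of_card_ge ?_ ?_
  · rintro _ ⟨x, rfl⟩
    rw [MonoidHom.mem_ker, powMonoidHom_apply, powMonoidHom_apply, ← pow_mul, ← hcard,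
      pow_card_eq_one']
  · rw [IsCyclic.card_powMonoidHom_range, IsCyclic.card_powMonoidHom_ker, hcard,
      Nat.gcd_mul_left_left, Nat.gcd_mul_right_left,
      Nat.mul_div_cancel_left _ (Nat.pos_of_mul_pos_right hpos)]

/-- The sum of the two nontrivial cubic characters of a finite field with `3 ∣ q - 1` elements. -/
def cubicTrace [DecidableEq F] (x : F) : ℤ :=
  if x = 0 then 0 else if x ^ ((Fintype.card F - 1) / 3) = 1 then 2 else -1

theorem pow_card_sub_one_div_pow {d : ℕ} (hd : d ∣ Fintype.card F - 1) {x : F} (hx : x ≠ 0) :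
    (x ^ ((Fintype.card F - 1) / d)) ^ d = 1 := by
  rw [← pow_mul, Nat.div_mul_cancel hd, FiniteField.pow_card_sub_one_eq_one x hx]

variable [DecidableEq F]

@[simp] theorem cubicTrace_zero : cubicTrace (0 : F) = 0 := if_pos rfl

@[simp] theorem cubicTrace_one : cubicTrace (1 : F) = 2 := by simp [cubicTrace]

theorem cubicTrace_of_ne_zero {x : F} (hx : x ≠ 0) : cubicTrace x = 2 ∨ cubicTrace x = -1 := by
  rw [cubicTrace, if_neg hx]
  split_ifs <;> simp

theorem cubicTrace_cube_mul (h3 : 3 ∣ Fintype.card F - 1) {z : F} (hz : z ≠ 0) (x : F) :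
    cubicTrace (z ^ 3 * x) = cubicTrace x := by
  simp only [cubicTrace, mul_eq_zero, pow_eq_zero_iff three_ne_zero, hz, false_or]
  rw [mul_pow, pow_right_comm, pow_card_sub_one_div_pow h3 hz, one_mul]

theorem cube_root_of_unity_trace_mul {R : Type*} [CommRing R] [IsDomain R] [DecidableEq R]
    {a b : R} (ha : a ^ 3 = 1) (hb : b ^ 3 = 1) :
    ((if a = 1 then 2 else -1) * if b = 1 then 2 else -1 : ℤ) =
      (if a * b = 1 then 2 else -1) + if a * b ^ 2 = 1 then 2 else -1 := by
  rcases eq_or_ne b 1 with rfl | hb1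
  · simp only [one_pow, mul_one, if_true]
    ring
  have hb2 : b ^ 2 ≠ 1 := fun h => hb1 (by linear_combination hb - b * h)
  have hgeom : b ^ 2 + b + 1 = 0 :=
    (mul_eq_zero.1 (show (b - 1) * (b ^ 2 + b + 1) = 0 by linear_combination hb)).resolve_left
      (sub_ne_zero.2 hb1)
  have hprod : (a - 1) * ((a - b ^ 2) * (a - b)) = 0 := by
    linear_combination ha - (a ^ 2 - a * b) * hgeom - hb
  simp only [mul_eq_zero, sub_eq_zero] at hprod
  rcases hprod with rfl | rfl | rfl
  · simp [hb1, hb2]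
  · simp [hb1, hb2, ← pow_succ, ← pow_add, hb, show b ^ 4 = b by linear_combination b * hb]
  · simp [hb1, ← sq, hb2, ← pow_succ', hb]

theorem cubicTrace_mul (h3 : 3 ∣ Fintype.card F - 1) (u v : F) :
    cubicTrace u * cubicTrace v = cubicTrace (u * v) + cubicTrace (u * v ^ 2) := by
  rcases eq_or_ne u 0 with rfl | hu
  · simp
  rcases eq_or_ne v 0 with rfl | hv
  · simp
  simp only [cubicTrace, mul_eq_zero, pow_eq_zero_iff two_ne_zero, hu, hv, or_false, if_false,
    mul_pow, pow_right_comm v 2]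
  exact cube_root_of_unity_trace_mul (pow_card_sub_one_div_pow h3 hu)
    (pow_card_sub_one_div_pow h3 hv)

theorem cubicTrace_sq (h3 : 3 ∣ Fintype.card F - 1) (x : F) :
    cubicTrace (x ^ 2) = cubicTrace x := by
  have := cubicTrace_mul h3 1 x
  simp only [one_mul, cubicTrace_one] at this
  linarith

theorem cubicTrace_mul_sq_comm (h3 : 3 ∣ Fintype.card F - 1) (u v : F) :
    cubicTrace (u * v ^ 2) = cubicTrace (v * u ^ 2) := by
  rcases eq_or_ne v 0 with rfl | hv
  · simp
  rw [← cubicTrace_sq h3, ← cubicTrace_cube_mul h3 hv (v * u ^ 2)]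
  ring_nf

theorem card_cube_roots (h3 : 3 ∣ Fintype.card F - 1) (x : F) :
    (#{y | y ^ 3 = x} : ℤ) = 1 + cubicTrace x := by
  rcases eq_or_ne x 0 with rfl | hx
  · rw [cubicTrace_zero, add_zero, Nat.cast_eq_one, card_eq_one]
    exact ⟨0, by ext; simp⟩
  by_cases h : x ^ ((Fintype.card F - 1) / 3) = 1
  · have hrange : Units.mk0 x hx ∈ (powMonoidHom 3 : Fˣ →* Fˣ).range := by
      rw [range_powMonoidHom_eq_ker (Nat.mul_div_cancel' h3).symm, MonoidHom.mem_ker]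
      ext
      simpa using h
    obtain ⟨w, hw⟩ := hrange
    obtain rfl : (w : F) ^ 3 = x := by simpa using congrArg Units.val hw
    rw [card_pow_eq_pow three_ne_zero, Nat.gcd_eq_right h3, cubicTrace, if_neg hx, if_pos h]
    norm_num
  · rw [cubicTrace, if_neg hx, if_neg h, add_neg_cancel, Nat.cast_eq_zero, card_eq_zero,
      filter_eq_empty_iff]
    rintro y - rfl
    refine h ?_
    rw [pow_right_comm]
    exact pow_card_sub_one_div_pow h3 (ne_zero_pow three_ne_zero hx)

theorem sum_comp_cube (h3 : 3 ∣ Fintype.card F - 1) (φ : F → ℤ) :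
    ∑ y, φ (y ^ 3) = ∑ x, φ x + ∑ x, φ x * cubicTrace x := by
  rw [← sum_fiberwise' univ (fun y : F => y ^ 3) φ, ← sum_add_distrib]
  refine sum_congr rfl fun x _ => ?_
  rw [sum_const, nsmul_eq_mul, card_cube_roots h3]
  ring

theorem sum_cubicTrace (h3 : 3 ∣ Fintype.card F - 1) : ∑ x : F, cubicTrace x = 0 := by
  simpa using sum_comp_cube h3 fun _ : F => 1

theorem sum_cubicTrace_linear (h3 : 3 ∣ Fintype.card F - 1) {a : F} (ha : a ≠ 0) (b : F) :
    ∑ x, cubicTrace (a * x + b) = 0 := by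
  rw [← sum_cubicTrace h3]
  exact Fintype.sum_equiv ((Equiv.mulLeft₀ a ha).trans (Equiv.addRight b)) _ _ fun x => by simp

theorem sum_cubicTrace_sub_mul_sub_sq (h3 : 3 ∣ Fintype.card F - 1) {a b : F} (hab : a ≠ b) :
    ∑ x, cubicTrace ((x - a) * (x - b) ^ 2) = -2 := by
  have hinv (z : F) : cubicTrace ((b + z⁻¹ - a) * (b + z⁻¹ - b) ^ 2) =
      cubicTrace ((b - a) * z + 1) - if z = 0 then 2 else 0 := by
    rcases eq_or_ne z 0 with rfl | hz
    · simp
    · rw [← cubicTrace_cube_mul h3 hz, if_neg hz, sub_zero]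
      congr 1
      field_simp
      ring
  rw [sum_eq_sum_add_inv b, sum_congr rfl fun z _ => hinv z, sum_sub_distrib,
    sum_cubicTrace_linear h3 (sub_ne_zero.2 hab.symm)]
  simp

theorem abs_sum_cubicTrace_quadratic_le (hF : ringChar F ≠ 2) (h3 : 3 ∣ Fintype.card F - 1)
    {k : F} (hk : k ≠ 0) (b c : F) :
    |∑ x, cubicTrace (k * x ^ 2 + b * x + c)| ≤ hasseBound F := by
  have h4k : 4 * k ≠ 0 :=
    mul_ne_zero (by rw [show (4 : F) = 2 ^ 2 by norm_num]
                    exact pow_ne_zero 2 (Ring.two_ne_zero hF)) hk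
  have hsum : ∑ x, cubicTrace (k * x ^ 2 + b * x + c) =
      ∑ y, quadraticChar F (4 * k * y ^ 3 + 0 * y ^ 2 + 0 * y + (b ^ 2 - 4 * k * c)) := by
    simp only [zero_mul, add_zero]
    rw [sum_comp_quadratic hF hk, sum_cubicTrace h3,
      sum_comp_cube h3 (fun s => quadraticChar F (4 * k * s + (b ^ 2 - 4 * k * c))),
      sum_quadraticChar_linear hF h4k]
    simp only [mul_comm]
  rw [hsum]
  exact abs_sum_quadraticChar_cubic_le hF h4k _ _ _

theorem abs_sum_cubicTrace_mul_mul_le (hF : ringChar F ≠ 2) (h3 : 3 ∣ Fintype.card F - 1)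
    {a b c : F} (hab : a ≠ b) (hac : a ≠ c) :
    |∑ x, cubicTrace ((x - a) * (x - b) * (x - c))| ≤ hasseBound F + 2 := by
  have hinv (z : F) : cubicTrace ((a + z⁻¹ - a) * (a + z⁻¹ - b) * (a + z⁻¹ - c)) =
      cubicTrace ((a - b) * (a - c) * z ^ 2 + (a - b + (a - c)) * z + 1) -
        if z = 0 then 2 else 0 := by
    rcases eq_or_ne z 0 with rfl | hz
    · simp
    · rw [← cubicTrace_cube_mul h3 hz, if_neg hz, sub_zero]
      congr 1
      field_simp
      ring
  rw [sum_eq_sum_add_inv a, sum_congr rfl fun z _ => hinv z, sum_sub_distrib]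
  simp only [sum_ite_eq', mem_univ, if_true]
  exact (abs_sub _ _).trans (add_le_add (abs_sum_cubicTrace_quadratic_le hF h3
    (mul_ne_zero (sub_ne_zero.2 hab) (sub_ne_zero.2 hac)) _ _) abs_two.le)

end CubicTrace

section GenusTwo

variable {F : Type*} [Field F] [Fintype F] [DecidableEq F]

-- The substitution `x ↦ x⁻¹` exchanges the two nontrivial cubic characters, up to the twist.
theorem sum_quadraticChar_mul_cubicTrace_sq (h3 : 3 ∣ Fintype.card F - 1) (b k : F) :
    ∑ x, quadraticChar F (x ^ 2 + b * x + 1) * cubicTrace (k ^ 2 * x) =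
      ∑ x, quadraticChar F (x ^ 2 + b * x + 1) * cubicTrace (k * x) := by
  refine Fintype.sum_equiv (Equiv.inv F) _ _ fun x => ?_
  rw [Equiv.inv_apply]
  rcases eq_or_ne x 0 with rfl | hx
  · simp
  congr 1
  · rw [← quadraticChar_sq_mul hx (x⁻¹ ^ 2 + _ + 1)]
    congr 1
    field_simp
    ring
  · rw [← cubicTrace_sq h3 (k * _), ← cubicTrace_cube_mul h3 hx ((k * _) ^ 2)]
    congr 1
    field_simp

theorem abs_sum_quadraticChar_mul_cubicTrace_le (h3 : 3 ∣ Fintype.card F - 1) (b k : F) :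
    |∑ x, quadraticChar F (x ^ 2 + b * x + 1) * cubicTrace (k * x)| ≤
      |∑ x, quadraticChar F (x ^ 2 + b * x + 1) * cubicTrace x| := by
  have htwist : 2 * ∑ x, quadraticChar F (x ^ 2 + b * x + 1) * cubicTrace (k * x) =
      cubicTrace k * ∑ x, quadraticChar F (x ^ 2 + b * x + 1) * cubicTrace x := by
    rw [two_mul]
    nth_rw 2 [← sum_quadraticChar_mul_cubicTrace_sq h3]
    rw [← sum_add_distrib, mul_sum]
    refine sum_congr rfl fun x _ => ?_
    rw [mul_left_comm, mul_comm (cubicTrace k), cubicTrace_mul h3, mul_add, mul_comm x,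
      mul_comm x]
  have hk : |cubicTrace k| ≤ 2 := by
    rcases eq_or_ne k 0 with rfl | hk
    · simp
    · rcases cubicTrace_of_ne_zero hk with h | h <;> simp [h]
  refine le_of_mul_le_mul_left ?_ (two_pos (α := ℤ))
  rw [← abs_two, ← abs_mul, htwist, abs_mul, abs_two]
  exact mul_le_mul_of_nonneg_right hk (abs_nonneg _)

-- Since `y⁶ + 2My³ + 1 = y³ (v³ - 3v + 2M)` with `v = y + 1 / y`, this genus 2 curve covers two
-- elliptic curves.
theorem abs_sum_quadraticChar_sextic_le (hF : ringChar F ≠ 2) {M : F} (h1 : M ≠ 1)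
    (h1' : M ≠ -1) :
    |∑ y, quadraticChar F ((y ^ 3) ^ 2 + 2 * M * y ^ 3 + 1)| ≤ 2 * hasseBound F + 3 := by
  have h2 : (2 : F) ≠ 0 := Ring.two_ne_zero hF
  have hterm (y : F) : quadraticChar F ((y ^ 3) ^ 2 + 2 * M * y ^ 3 + 1) =
      quadraticChar F y * quadraticChar F ((y + 1 ^ 2 / y) ^ 3 - 3 * (y + 1 ^ 2 / y) + 2 * M) +
        if y = 0 then 1 else 0 := by
    rcases eq_or_ne y 0 with rfl | hy
    · simp
    · rw [if_neg hy, add_zero, ← map_mul, ← quadraticChar_sq_mul hy (y * _)]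
      congr 1
      field_simp
      ring
  have hsplit (v : F) : (quadraticChar F (v + 2 * 1) + quadraticChar F (v - 2 * 1)) *
      quadraticChar F (v ^ 3 - 3 * v + 2 * M) =
      quadraticChar F ((v - -2) * (v ^ 3 + 0 * v ^ 2 + -3 * v + 2 * M)) +
      quadraticChar F ((v - 2) * (v ^ 3 + 0 * v ^ 2 + -3 * v + 2 * M)) := by
    rw [add_mul, ← map_mul, ← map_mul]
    congr 2 <;> ring
  have hroot : (-2 : F) ^ 3 + 0 * (-2) ^ 2 + -3 * -2 + 2 * M ≠ 0 := by
    rw [show (-2 : F) ^ 3 + 0 * (-2) ^ 2 + -3 * -2 + 2 * M = 2 * (M - 1) by ring]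
    exact mul_ne_zero h2 (sub_ne_zero.2 h1)
  have hroot' : (2 : F) ^ 3 + 0 * 2 ^ 2 + -3 * 2 + 2 * M ≠ 0 := by
    rw [show (2 : F) ^ 3 + 0 * 2 ^ 2 + -3 * 2 + 2 * M = 2 * (M - -1) by ring]
    exact mul_ne_zero h2 (sub_ne_zero.2 h1')
  rw [sum_congr rfl fun y _ => hterm y, sum_add_distrib,
    sum_quadraticChar_mul_comp_add_div hF one_ne_zero
      (fun v => quadraticChar F (v ^ 3 - 3 * v + 2 * M)),
    sum_congr rfl fun v _ => hsplit v, sum_add_distrib, sum_ite_eq', if_pos (mem_univ _)]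
  refine (abs_add_three _ _ _).trans ?_
  rw [abs_one]
  linarith [abs_sum_quadraticChar_quartic_le hF hroot, abs_sum_quadraticChar_quartic_le hF hroot']

theorem abs_sum_quadraticChar_mul_cubicTrace_le_hasseBound (hF : ringChar F ≠ 2)
    (h3 : 3 ∣ Fintype.card F - 1) {M : F} (h1 : M ≠ 1) (h1' : M ≠ -1) (k : F) :
    |∑ x, quadraticChar F (x ^ 2 + 2 * M * x + 1) * cubicTrace (k * x)| ≤
      2 * hasseBound F + 4 := by
  have hdisc : (2 * M) ^ 2 - 4 * 1 ≠ 0 := by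
    rw [show (2 * M) ^ 2 - 4 * 1 = 2 ^ 2 * ((M - 1) * (M - -1)) by ring]
    exact mul_ne_zero (pow_ne_zero 2 (Ring.two_ne_zero hF))
      (mul_ne_zero (sub_ne_zero.2 h1) (sub_ne_zero.2 h1'))
  have hcube := sum_comp_cube h3 fun x => quadraticChar F (x ^ 2 + 2 * M * x + 1)
  rw [sum_quadraticChar_quadratic hF hdisc] at hcube
  calc _ ≤ |∑ x, quadraticChar F (x ^ 2 + 2 * M * x + 1) * cubicTrace x| :=
        abs_sum_quadraticChar_mul_cubicTrace_le h3 _ _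
    _ = |∑ y, quadraticChar F ((y ^ 3) ^ 2 + 2 * M * y ^ 3 + 1) + 1| := by
        rw [hcube, neg_add_cancel_comm]
    _ ≤ |∑ y, quadraticChar F ((y ^ 3) ^ 2 + 2 * M * y ^ 3 + 1)| + |1| := abs_add_le _ _
    _ ≤ 2 * hasseBound F + 4 := by
        rw [abs_one]
        linarith [abs_sum_quadraticChar_sextic_le hF h1 h1']

theorem sum_cubicTrace_mul_mul_sq (hF : ringChar F ≠ 2) (h3 : 3 ∣ Fintype.card F - 1)
    {a b c : F} (hac : a ≠ c) (hbc : b ≠ c) :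
    ∑ x, cubicTrace ((x - a) * (x - b) * (x - c) ^ 2) =
      ∑ s, quadraticChar F (s ^ 2 + 2 * (a + b - 2 * c) * s + (a - b) ^ 2) * cubicTrace s := by
  have hterm (z : F) : cubicTrace ((c + z - a) * (c + z - b) * (c + z - c) ^ 2) =
      if z ≠ 0 then cubicTrace (z + (a - c) * (b - c) / z - (a + b - 2 * c)) else 0 := by
    rcases eq_or_ne z 0 with rfl | hz
    · simp
    · rw [if_pos hz, ← cubicTrace_cube_mul h3 hz (_ - _)]
      congr 1
      field_simp
      ring
  have htrans : ∑ v, cubicTrace (v - (a + b - 2 * c)) = 0 :=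
    ((Equiv.subRight (a + b - 2 * c)).sum_comp cubicTrace).trans (sum_cubicTrace h3)
  rw [← Equiv.sum_comp (Equiv.addLeft c)]
  simp only [Equiv.coe_addLeft, hterm]
  rw [← sum_filter, sum_comp_add_div hF (mul_ne_zero (sub_ne_zero.2 hac) (sub_ne_zero.2 hbc))
    fun v => cubicTrace (v - (a + b - 2 * c)), htrans, zero_add]
  refine Fintype.sum_equiv (Equiv.subRight (a + b - 2 * c)) _ _ fun v => ?_
  rw [mul_comm, Equiv.subRight_apply]
  ring_nf

theorem abs_sum_cubicTrace_mul_mul_sq_le (hF : ringChar F ≠ 2) (h3 : 3 ∣ Fintype.card F - 1)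
    {a b c : F} (hab : a ≠ b) (hac : a ≠ c) (hbc : b ≠ c) :
    |∑ x, cubicTrace ((x - a) * (x - b) * (x - c) ^ 2)| ≤ 2 * hasseBound F + 4 := by
  have h2 : (2 : F) ≠ 0 := Ring.two_ne_zero hF
  have hd : a - b ≠ 0 := sub_ne_zero.2 hab
  have hM : (a + b - 2 * c) / (a - b) ≠ 1 := fun h => hbc <| mul_left_cancel₀ h2 <| by
    linear_combination (div_eq_one_iff_eq hd).1 h
  have hM' : (a + b - 2 * c) / (a - b) ≠ -1 := fun h => hac <| mul_left_cancel₀ h2 <| by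
    linear_combination (div_eq_iff hd).1 h
  convert abs_sum_quadraticChar_mul_cubicTrace_le_hasseBound hF h3 hM hM' (a - b) using 2
  rw [sum_cubicTrace_mul_mul_sq hF h3 hac hbc]
  refine (Fintype.sum_equiv (Equiv.mulLeft₀ (a - b) hd) _ _ fun u => ?_).symm
  rw [Equiv.mulLeft₀_apply, ← quadraticChar_sq_mul hd]
  congr 2
  field_simp

end GenusTwo

section CubicSieve

variable {F : Type*} [Field F] [Fintype F] [DecidableEq F]

theorem shiftCorr_cubicTrace_eq_zero (h3 : 3 ∣ Fintype.card F - 1) {S : Finset F}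
    (hS : #S = 1) : shiftCorr cubicTrace S = 0 := by
  obtain ⟨a, rfl⟩ := card_eq_one.1 hS
  simpa [shiftCorr, sub_eq_add_neg] using sum_cubicTrace_linear h3 one_ne_zero (-a)

theorem abs_shiftCorr_cubicTrace_le_of_card_eq_two (hF : ringChar F ≠ 2)
    (h3 : 3 ∣ Fintype.card F - 1) {S : Finset F} (hS : #S = 2) :
    |shiftCorr cubicTrace S| ≤ hasseBound F + 2 := by
  obtain ⟨a, b, hab, rfl⟩ := card_eq_two.1 hS
  have hexpand (x : F) : ∏ y ∈ {a, b}, cubicTrace (x - y) =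
      cubicTrace (1 * x ^ 2 + -(a + b) * x + a * b) + cubicTrace ((x - a) * (x - b) ^ 2) := by
    rw [prod_pair hab, cubicTrace_mul h3]
    ring_nf
  rw [shiftCorr, sum_congr rfl fun x _ => hexpand x, sum_add_distrib,
    sum_cubicTrace_sub_mul_sub_sq h3 hab]
  exact (abs_add_le _ _).trans
    (add_le_add (abs_sum_cubicTrace_quadratic_le hF h3 one_ne_zero _ _) (by norm_num))

theorem abs_shiftCorr_cubicTrace_le_of_card_eq_three (hF : ringChar F ≠ 2)
    (h3 : 3 ∣ Fintype.card F - 1) {S : Finset F} (hS : #S = 3) :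
    |shiftCorr cubicTrace S| ≤ 7 * hasseBound F + 14 := by
  obtain ⟨a, b, c, hab, hac, hbc, rfl⟩ := card_eq_three.1 hS
  have hexpand (x : F) : ∏ y ∈ {a, b, c}, cubicTrace (x - y) =
      cubicTrace ((x - a) * (x - b) * (x - c)) + cubicTrace ((x - a) * (x - b) * (x - c) ^ 2) +
        (cubicTrace ((x - a) * (x - c) * (x - b) ^ 2) +
          cubicTrace ((x - b) * (x - c) * (x - a) ^ 2)) := by
    rw [prod_insert (by simp [hab, hac]), prod_pair hbc, ← mul_assoc, cubicTrace_mul h3, add_mul,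
      cubicTrace_mul h3, cubicTrace_mul h3, mul_right_comm _ (_ ^ 2),
      mul_assoc _ (_ ^ 2) (_ ^ 2), ← mul_pow, cubicTrace_mul_sq_comm h3 (x - a)]
  simp only [shiftCorr, hexpand, sum_add_distrib]
  refine (abs_add_le _ _).trans ((add_le_add (abs_add_le _ _) (abs_add_le _ _)).trans ?_)
  linarith [abs_sum_cubicTrace_mul_mul_le hF h3 hab hac,
    abs_sum_cubicTrace_mul_mul_sq_le hF h3 hab hac hbc,
    abs_sum_cubicTrace_mul_mul_sq_le hF h3 hac hab hbc.symm,
    abs_sum_cubicTrace_mul_mul_sq_le hF h3 hbc hab.symm hac.symm]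

theorem shiftWeight_eq_sum_esymm {G : Type*} [Sub G] (w : ℕ → ℤ) (φ : G → ℤ) (T : Finset G)
    (x : G) :
    shiftWeight w φ T x = ∑ k ∈ range (#T + 1), w k * (T.1.map fun a => φ (x - a)).esymm k := by
  simp only [shiftWeight, sum_powerset, Finset.esymm_map_val, mul_sum]
  refine sum_congr rfl fun k _ => sum_congr rfl fun S hS => ?_
  rw [(mem_powersetCard.1 hS).2]

/-- The weights of the cubic sieve. If five numbers are all `2` or `-1`, and `f` of them are `2`,
then the combination of their elementary symmetric polynomials with these coefficients is
`9 / 2 * (1 - f) * (f - 3) * (f - 4)`, which is positive only for `f = 0`. -/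
def cubicSieveCoeff : ℕ → ℤ
  | 0 => 4
  | 1 => -4
  | 2 => 2
  | 3 => -1
  | _ => 0

theorem sum_cubicSieveCoeff_mul_esymm_le : ∀ m ∈ Finset.sym ({0, 2, -1} : Finset ℤ) 5, 0 ∈ m →
    ∑ k ∈ range 6, cubicSieveCoeff k * (m : Multiset ℤ).esymm k ≤ 36 := by
  decide +kernel

theorem eq_neg_one_of_sum_cubicSieveCoeff_mul_esymm_pos :
    ∀ m ∈ Finset.sym ({2, -1} : Finset ℤ) 5,
      0 < ∑ k ∈ range 6, cubicSieveCoeff k * (m : Multiset ℤ).esymm k → ∀ a ∈ m, a = -1 := by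
  decide

theorem shiftWeight_cubicTrace_le {T : Finset F} (hT : #T = 5) {x : F} (hx : x ∈ T) :
    shiftWeight cubicSieveCoeff cubicTrace T x ≤ 36 := by
  rw [shiftWeight_eq_sum_esymm, hT]
  refine sum_cubicSieveCoeff_mul_esymm_le
    ⟨T.1.map fun a => cubicTrace (x - a), by rw [Multiset.card_map, card_val, hT]⟩
    (mem_sym_iff.2 fun c hc => ?_) (Multiset.mem_map.2 ⟨x, hx, by simp⟩)
  obtain ⟨a, -, rfl⟩ := Multiset.mem_map.1 hc
  rcases eq_or_ne (x - a) 0 with h | h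
  · simp [h]
  · rcases cubicTrace_of_ne_zero h with h | h <;> simp [h]

theorem cubicTrace_sub_eq_neg_one_of_shiftWeight_pos {T : Finset F} (hT : #T = 5) {x : F}
    (hx : x ∉ T) (hpos : 0 < shiftWeight cubicSieveCoeff cubicTrace T x) {a : F} (ha : a ∈ T) :
    cubicTrace (x - a) = -1 := by
  rw [shiftWeight_eq_sum_esymm, hT] at hpos
  refine eq_neg_one_of_sum_cubicSieveCoeff_mul_esymm_pos
    ⟨T.1.map fun a => cubicTrace (x - a), by rw [Multiset.card_map, card_val, hT]⟩
    (mem_sym_iff.2 fun c hc => ?_) hpos _ (Multiset.mem_map.2 ⟨a, ha, rfl⟩)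
  obtain ⟨b, hb, rfl⟩ := Multiset.mem_map.1 hc
  rcases cubicTrace_of_ne_zero (sub_ne_zero.2 (ne_of_mem_of_not_mem hb hx).symm) with h | h <;>
    simp [h]

theorem exists_forall_cubicTrace_sub_eq_neg_one (hF : ringChar F ≠ 2)
    (h3 : 3 ∣ Fintype.card F - 1) {T : Finset F} (hT : #T = 5)
    (hq : 90 * hasseBound F + 360 < 4 * Fintype.card F) :
    ∃ x, ∀ a ∈ T, cubicTrace (x - a) = -1 := by
  set L : ℕ → ℤ := fun
    | 0 => 4 * Fintype.card F
    | 1 => 0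
    | 2 => -(2 * (hasseBound F + 2))
    | 3 => -(7 * hasseBound F + 14)
    | _ => 0 with hL
  have hcorr (S : Finset F) (hS : S ⊆ T) :
      L #S ≤ cubicSieveCoeff #S * shiftCorr cubicTrace S := by
    have hcard : #S ≤ 5 := (card_le_card hS).trans hT.le
    interval_cases h : #S <;> simp only [hL, cubicSieveCoeff]
    · simp [card_eq_zero.1 h, shiftCorr]
    · simp [shiftCorr_cubicTrace_eq_zero h3 h]
    · linarith [abs_le.1 (abs_shiftCorr_cubicTrace_le_of_card_eq_two hF h3 h)]
    · linarith [abs_le.1 (abs_shiftCorr_cubicTrace_le_of_card_eq_three hF h3 h)]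
    · simp
    · simp
  have hsum : #T * 36 < ∑ k ∈ range (#T + 1), (#T).choose k • L k := by
    rw [hT]
    simp only [sum_range_succ, range_zero, sum_empty, hL, Nat.choose, nsmul_eq_mul]
    push_cast
    linarith
  obtain ⟨x, hx, hpos⟩ :=
    exists_notMem_shiftWeight_pos hcorr (fun x hx => shiftWeight_cubicTrace_le hT hx) hsum
  exact ⟨x, fun a ha => cubicTrace_sub_eq_neg_one_of_shiftWeight_pos hT hx hpos ha⟩

end CubicSieve

section Incidence

theorem sum_comp_mul_left {G₀ M : Type*} [GroupWithZero G₀] [AddCommMonoid M] {H : Finset G₀}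
    (hH : ∀ x ∈ H, ∀ y, x * y ∈ H ↔ y ∈ H) (h0 : 0 ∉ H) {x : G₀} (hx : x ∈ H) (φ : G₀ → M) :
    ∑ h ∈ H, φ (x * h) = ∑ h ∈ H, φ h :=
  sum_equiv (Equiv.mulLeft₀ x (ne_of_mem_of_not_mem hx h0)) (fun h => (hH x hx h).symm)
    fun _ _ => rfl

variable {F : Type*} [Field F] [Fintype F]

theorem sum_sum_comp_line_mul_comp_line [DecidableEq F] {c : F → ℤ} (hc : ∑ x, c x = 0)
    (s t : F) :
    ∑ m, ∑ b, c (m * s + b) * c (m * t + b) =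
      if s = t then Fintype.card F * ∑ x, c x ^ 2 else 0 := by
  have hshift (m : F) : ∑ b, c (m * s + b) * c (m * t + b) = ∑ x, c x * c (m * (t - s) + x) :=
    Fintype.sum_equiv (Equiv.addLeft (m * s)) _ _ fun b => by
      rw [Equiv.coe_addLeft]
      ring_nf
  rw [sum_congr rfl fun m _ => hshift m]
  split_ifs with hst
  · simp [hst, sq]
  · have hline (x : F) : ∑ m, c (m * (t - s) + x) = ∑ y, c y :=
      Fintype.sum_equiv ((Equiv.mulRight₀ (t - s) (sub_ne_zero.2 (Ne.symm hst))).trans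
        (Equiv.addRight x)) _ _ fun _ => rfl
    simp only [sum_comm (s := univ) (t := univ) (f := fun _ x => c x * _), ← mul_sum, hline, hc,
      mul_zero, sum_const_zero]

theorem sum_sum_sq_sum_comp_line {c : F → ℤ} (hc : ∑ x, c x = 0) (H : Finset F) :
    ∑ m, ∑ b, (∑ h ∈ H, c (m * h + b)) ^ 2 = #H * (Fintype.card F * ∑ x, c x ^ 2) := by
  classical
  simp only [sq (∑ _ ∈ H, _), sum_mul_sum, sum_comm (s := univ) (t := H),
    sum_sum_comp_line_mul_comp_line hc, sum_ite_eq]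
  rw [sum_congr rfl fun _ hh => if_pos hh, sum_const, nsmul_eq_mul]

theorem card_mul_sq_sum_comp_add_one_le {H : Finset F}
    (hH : ∀ x ∈ H, ∀ y, x * y ∈ H ↔ y ∈ H) (h0 : 0 ∉ H) {c : F → ℤ} (hc : ∑ x, c x = 0)
    (hcH : ∀ x ∈ H, ∀ y, c (x * y) = c y) :
    #H * (∑ h ∈ H, c (h + 1)) ^ 2 ≤ Fintype.card F * ∑ x, c x ^ 2 := by
  rcases H.eq_empty_or_nonempty with rfl | hne
  · simpa using mul_nonneg (Nat.cast_nonneg _) (sum_nonneg fun x _ => sq_nonneg (c x))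
  have hline (m b : F) (hm : m ∈ H) (hb : b ∈ H) :
      ∑ h ∈ H, c (m * h + b) = ∑ h ∈ H, c (h + 1) := by
    rw [sum_comp_mul_left hH h0 hm (fun h => c (h + b)), ← sum_comp_mul_left hH h0 hb]
    exact sum_congr rfl fun h _ => by rw [← mul_add_one, hcH b hb]
  refine le_of_mul_le_mul_left ?_ (Nat.cast_pos (α := ℤ).2 hne.card_pos)
  calc #H * (#H * (∑ h ∈ H, c (h + 1)) ^ 2)
      = ∑ m ∈ H, ∑ b ∈ H, (∑ h ∈ H, c (m * h + b)) ^ 2 := by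
        rw [sum_congr rfl fun m hm => sum_congr rfl fun b hb => by rw [hline m b hm hb]]
        simp only [sum_const, nsmul_eq_mul]
    _ ≤ ∑ m, ∑ b, (∑ h ∈ H, c (m * h + b)) ^ 2 :=
        (sum_le_sum fun m _ => sum_le_univ_sum_of_nonneg fun b => sq_nonneg _).trans
          (sum_le_univ_sum_of_nonneg fun m => sum_nonneg fun b _ => sq_nonneg _)
    _ = #H * (Fintype.card F * ∑ x, c x ^ 2) := sum_sum_sq_sum_comp_line hc H

theorem sq_card_mul_card_filter_add_one_sub_le [DecidableEq F] {H : Finset F}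
    (hH : ∀ x ∈ H, ∀ y, x * y ∈ H ↔ y ∈ H) (h0 : 0 ∉ H) :
    (Fintype.card F * #{x ∈ H | x + 1 ∈ H} - #H ^ 2 : ℤ) ^ 2 ≤ Fintype.card F ^ 3 := by
  rcases H.eq_empty_or_nonempty with rfl | hne
  · simp
  set f : F → ℤ := fun x => if x ∈ H then 1 else 0 with hf
  have hsum : ∑ x, f x = #H := by simp [hf]
  have hcount : ∑ h ∈ H, f (h + 1) = #{x ∈ H | x + 1 ∈ H} := by simp [hf]
  have hidem (x : F) : f x * f x = f x := by simp [hf]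
  have hzero : ∑ x, (Fintype.card F * f x - #H) = 0 := by
    simp [sum_sub_distrib, ← mul_sum, hsum]
  have hsq : ∑ x, (Fintype.card F * f x - #H) ^ 2 =
      #H * (Fintype.card F * (Fintype.card F - #H)) := by
    have hexpand (x : F) : (Fintype.card F * f x - #H) ^ 2 =
        (Fintype.card F ^ 2 - 2 * #H * Fintype.card F) * f x + #H ^ 2 := by
      linear_combination (Fintype.card F : ℤ) ^ 2 * hidem x
    simp only [hexpand, sum_add_distrib, ← mul_sum, hsum, sum_const, card_univ, nsmul_eq_mul]
    ring
  have hle := card_mul_sq_sum_comp_add_one_le hH h0 hzero fun x hx y => by simp only [hf, hH x hx y]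
  rw [sum_sub_distrib, ← mul_sum, hcount, sum_const, nsmul_eq_mul, ← sq, hsq, mul_left_comm] at hle
  refine (le_of_mul_le_mul_left hle (Nat.cast_pos (α := ℤ).2 hne.card_pos)).trans ?_
  have : (0 : ℤ) ≤ Fintype.card F ^ 2 * #H := by positivity
  linarith

end Incidence

section Potents

open scoped Pointwise

theorem card_add_add_card_filter_le {G : Type*} [AddGroup G] [DecidableEq G] {A B : Finset G}
    {a d : G} (ha : a ∈ A) (had : a + d ∈ A) (hd : d ≠ 0) :
    #(A + B) + #{x ∈ B | d + x ∈ B} ≤ #A * #B := by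
  -- `a + d + x = a + (d + x)` is a sum already without the element `a + d` of `A`.
  have hsub : A + B ⊆ (A.erase (a + d) + B) ∪ ({x ∈ B | d + x ∉ B}.image (a + d + ·)) := by
    intro y hy
    obtain ⟨a', ha', x, hx, rfl⟩ := mem_add.1 hy
    rw [mem_union]
    by_cases h : a' = a + d
    · subst h
      by_cases hdx : d + x ∈ B
      · rw [add_assoc]
        exact .inl (add_mem_add (mem_erase.2 ⟨by simpa using hd, ha⟩) hdx)
      · exact .inr (mem_image_of_mem _ (mem_filter.2 ⟨hx, hdx⟩))
    · exact .inl (add_mem_add (mem_erase.2 ⟨h, ha'⟩) hx)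
  have hcard := (card_le_card hsub).trans
    ((card_union_le _ _).trans (add_le_add card_add_le card_image_le))
  rw [← card_erase_add_one had, add_one_mul]
  linarith [card_filter_add_card_filter_not (s := B) fun x => d + x ∈ B]

theorem zero_notMem_nthRootsFinset {R : Type*} [CommRing R] [IsDomain R] {d : ℕ} (hd : 0 < d) :
    0 ∉ nthRootsFinset d (1 : R) := by
  rw [mem_nthRootsFinset hd, zero_pow hd.ne']
  exact zero_ne_one

theorem card_nthRootsFinset_le {R : Type*} [CommRing R] [IsDomain R] (d : ℕ) :
    #(nthRootsFinset d (1 : R)) ≤ d := by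
  classical
  rw [nthRootsFinset_def]
  exact (Multiset.toFinset_card_le _).trans (card_nthRoots d 1)

theorem isPrimitiveRoot_four {R : Type*} [CommRing R] [IsDomain R] (hR : ringChar R ≠ 2) {i : R}
    (hi : i ^ 2 = -1) :
    IsPrimitiveRoot i 4 := by
  rw [IsPrimitiveRoot.iff_orderOf]
  refine orderOf_eq_prime_pow (p := 2) (n := 1) ?_ ?_
  · rw [pow_one, hi]
    exact Ring.neg_one_ne_one_of_char_ne_two hR
  · rw [pow_succ, pow_one, pow_mul, hi, neg_one_sq]

theorem lt_four_mul_card_of_sq_le {F : Type*} [Fintype F] (hq : 47 ^ 2 ≤ Fintype.card F) :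
    90 * hasseBound F + 360 < 4 * Fintype.card F := by
  have hsq := hasseBound_sq_le F
  have : (47 ^ 2 : ℤ) ≤ Fintype.card F := mod_cast hq
  rcases le_or_gt (hasseBound F) 94 with h | h
  · linarith
  · nlinarith

theorem lt_card_of_sq_le {F : Type*} [Fintype F] (hq : 47 ^ 2 ≤ Fintype.card F) :
    17 * hasseBound F + 175 < Fintype.card F := by
  have : (47 ^ 2 : ℤ) ≤ Fintype.card F := mod_cast hq
  linarith [lt_four_mul_card_of_sq_le hq]

variable (F : Type*) [Field F] [Fintype F] [DecidableEq F]

/-- The set `C_n` of `n`-potents. -/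
def potents (n : ℕ) : Finset F := {a | a ^ n = a}

variable {F}

theorem potents_succ {d : ℕ} (hd : 0 < d) :
    potents F (d + 1) = insert 0 (nthRootsFinset d (1 : F)) := by
  ext a
  rw [potents, mem_filter_univ, mem_insert, mem_nthRootsFinset hd]
  rcases eq_or_ne a 0 with rfl | ha
  · simp
  · rw [pow_succ, mul_eq_right₀ ha, or_iff_right ha]

theorem card_potents_succ {d : ℕ} (hd : 0 < d) :
    #(potents F (d + 1)) = #(nthRootsFinset d (1 : F)) + 1 := by
  rw [potents_succ hd, card_insert_of_notMem (zero_notMem_nthRootsFinset hd)]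

theorem potents_subset_potents_gcd {n : ℕ} (hn : n ≠ 0) :
    potents F n ⊆ potents F ((n - 1).gcd (Fintype.card F - 1) + 1) := by
  intro a ha
  rw [potents, mem_filter_univ] at ha ⊢
  rcases eq_or_ne a 0 with rfl | ha0
  · simp
  · rw [pow_succ, mul_eq_right₀ ha0, pow_gcd_eq_one]
    refine ⟨(mul_eq_right₀ ha0).1 ?_, FiniteField.pow_card_sub_one_eq_one a ha0⟩
    rw [pow_sub_one_mul hn, ha]

theorem prod_sub_potents_five {i : F} (hi : IsPrimitiveRoot i 4) (x : F) :
    ∏ a ∈ potents F 5, (x - a) = x ^ 5 - x := by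
  rw [potents_succ four_pos, prod_insert (zero_notMem_nthRootsFinset four_pos)]
  have := hi.pow_sub_pow_eq_prod_sub_mul x 1 four_pos
  simp only [mul_one, one_pow] at this
  rw [← this]
  ring

theorem card_potents_five_le (h : ∀ i : F, i ^ 2 ≠ -1) : #(potents F 5) ≤ 3 := by
  refine (card_le_card fun a ha => ?_).trans (card_le_three (a := 0) (b := 1) (c := -1))
  rw [potents, mem_filter_univ, ← sub_eq_zero,
    show a ^ 5 - a = a * ((a - 1) * ((a - -1) * (a ^ 2 - -1))) by ring] at ha
  rw [mul_eq_zero, mul_eq_zero, mul_eq_zero, sub_eq_zero, sub_eq_zero, sub_eq_zero] at ha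
  simpa [h] using ha

theorem card_potents_five_le_five : #(potents F 5) ≤ 5 := by
  rw [card_potents_succ four_pos]
  exact Nat.add_le_add_right (card_nthRootsFinset_le 4) 1

theorem quadraticChar_ne_neg_one_of_mem_potents {d k : ℕ}
    (hd : Fintype.card F - 1 = d * (2 * k)) {b : F} (hb : b ∈ potents F (d + 1)) :
    quadraticChar F b ≠ -1 := by
  rw [Ne, quadraticChar_neg_one_iff_not_isSquare, not_not]
  rcases eq_or_ne b 0 with rfl | hb0
  · exact IsSquare.zero
  · rw [potents, mem_filter_univ, pow_succ, mul_eq_right₀ hb0] at hb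
    by_cases hF : ringChar F = 2
    · exact FiniteField.isSquare_of_char_two hF b
    · have := Fintype.card_pos (α := F)
      have hcard : Fintype.card F / 2 = d * k := by grind
      rw [FiniteField.isSquare_iff hF hb0, hcard, pow_mul, hb, one_pow]

theorem cubicTrace_ne_neg_one_of_mem_potents {d : ℕ} (hd : Fintype.card F - 1 = d * 3) {b : F}
    (hb : b ∈ potents F (d + 1)) : cubicTrace b ≠ -1 := by
  rcases eq_or_ne b 0 with rfl | hb0
  · simp [cubicTrace]
  · rw [potents, mem_filter_univ, pow_succ, mul_eq_right₀ hb0] at hb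
    simp [cubicTrace, hb0, hd, hb]

theorem add_potents_ne_univ_of_forall {A : Finset F} {n : ℕ} {x : F}
    (hx : ∀ a ∈ A, x - a ∉ potents F n) : A + potents F n ≠ univ := by
  intro h
  obtain ⟨a, ha, b, hb, rfl⟩ := mem_add.1 (h ▸ mem_univ x)
  exact hx a ha (by rwa [add_sub_cancel_left])

theorem potents_five_add_potents_ne_univ_of_even (hF : ringChar F ≠ 2)
    (hq : 47 ^ 2 ≤ Fintype.card F) {d k : ℕ} (hd : Fintype.card F - 1 = d * (2 * k)) :
    potents F 5 + potents F (d + 1) ≠ univ := by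
  have hcorr (hT : #(potents F 5) = 5) :
      shiftCorr (quadraticChar F) (potents F 5) ≤ 2 * hasseBound F := by
    obtain ⟨i, hi⟩ : ∃ i : F, i ^ 2 = -1 := by
      by_contra! h
      exact absurd (card_potents_five_le h) (by simp [hT])
    simp only [shiftCorr, ← map_prod, prod_sub_potents_five (isPrimitiveRoot_four hF hi)]
    exact (le_abs_self _).trans (abs_sum_quadraticChar_pow_five_sub_le hF hi)
  obtain ⟨x, hx⟩ := exists_forall_quadraticChar_sub_eq_neg_one hF card_potents_five_le_five hcorr
    (lt_card_of_sq_le hq)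
  exact add_potents_ne_univ_of_forall fun a ha hb =>
    quadraticChar_ne_neg_one_of_mem_potents hd hb (hx a ha)

theorem potents_five_add_potents_ne_univ_of_three (hF : ringChar F ≠ 2)
    (hq : 47 ^ 2 ≤ Fintype.card F) {d : ℕ} (hd : Fintype.card F - 1 = d * 3) :
    potents F 5 + potents F (d + 1) ≠ univ := by
  obtain ⟨T, hsub, hT⟩ := exists_superset_card_eq (card_potents_five_le_five (F := F))
    (le_trans (by norm_num) hq)
  obtain ⟨x, hx⟩ := exists_forall_cubicTrace_sub_eq_neg_one hF (hd ▸ dvd_mul_left 3 d) hT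
    (lt_four_mul_card_of_sq_le hq)
  exact add_potents_ne_univ_of_forall fun a ha hb =>
    cubicTrace_ne_neg_one_of_mem_potents hd hb (hx a (hsub ha))

theorem four_lt_card_filter_add_one_mem {H : Finset F}
    (hH : ∀ x ∈ H, ∀ y, x * y ∈ H ↔ y ∈ H) (h0 : 0 ∉ H) (hq : 47 ^ 2 ≤ Fintype.card F)
    (hcard : Fintype.card F ≤ 5 * (#H + 1)) : 4 < #{x ∈ H | x + 1 ∈ H} := by
  by_contra! hf
  have hincidence := sq_card_mul_card_filter_add_one_sub_le hH h0
  zify at hq hcard hf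
  set q := (Fintype.card F : ℤ)
  set N := (#H : ℤ)
  have hN : q * (q - 110) ≤ 25 * (N ^ 2 - q * #{x ∈ H | x + 1 ∈ H}) := by nlinarith
  have hsq : q ^ 2 * (q - 110) ^ 2 ≤ q ^ 2 * (625 * q) :=
    calc q ^ 2 * (q - 110) ^ 2 = (q * (q - 110)) ^ 2 := by ring
      _ ≤ (25 * (N ^ 2 - q * #{x ∈ H | x + 1 ∈ H})) ^ 2 :=
        pow_le_pow_left₀ (by nlinarith) hN 2
      _ ≤ q ^ 2 * (625 * q) := by linarith
  have := le_of_mul_le_mul_left hsq (by positivity)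
  nlinarith

theorem potents_five_add_potents_ne_univ_of_five_le (hq : 47 ^ 2 ≤ Fintype.card F) {d k : ℕ}
    (hd : Fintype.card F - 1 = d * k) (hk : 5 ≤ k) :
    potents F 5 + potents F (d + 1) ≠ univ := by
  intro huniv
  have hd0 : 0 < d := by grind
  have hmem (x : F) : x ∈ nthRootsFinset d 1 ↔ x ^ d = 1 := mem_nthRootsFinset hd0 1
  have hcover : #(potents F 5 + potents F (d + 1)) +
      #{x ∈ potents F (d + 1) | 1 + x ∈ potents F (d + 1)} ≤
        #(potents F 5) * #(potents F (d + 1)) :=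
    card_add_add_card_filter_le (a := 0) (by simp [potents]) (by simp [potents]) one_ne_zero
  have hfilter : #{x ∈ nthRootsFinset d (1 : F) | x + 1 ∈ nthRootsFinset d (1 : F)} ≤
      #{x ∈ potents F (d + 1) | 1 + x ∈ potents F (d + 1)} := by
    refine card_le_card fun x hx => ?_
    simp only [mem_filter, potents_succ hd0, mem_insert, add_comm (1 : F)] at hx ⊢
    exact ⟨.inr hx.1, .inr hx.2⟩
  rw [huniv, card_univ, card_potents_succ hd0] at hcover
  have hcard := hcover.trans (Nat.mul_le_mul_right _ card_potents_five_le_five)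
  have hmany := four_lt_card_filter_add_one_mem (H := nthRootsFinset d (1 : F))
    (fun x hx y => by rw [hmem, hmem, mul_pow, (hmem x).1 hx, one_mul])
    (zero_notMem_nthRootsFinset hd0) hq (by omega)
  have hroots := card_nthRootsFinset_le (R := F) d
  have hdk := Nat.mul_le_mul_left d hk
  omega

theorem potents_five_subset_of_char_two (hF : ringChar F = 2) : potents F 5 ⊆ {0, 1} := by
  intro a ha
  have : CharP F 2 := ringChar.of_eq hF
  rw [potents, mem_filter_univ] at ha
  rcases eq_or_ne a 0 with rfl | ha0
  · simp
  · rw [pow_succ, mul_eq_right₀ ha0] at ha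
    have h4 : (a - 1) ^ 2 ^ 2 = 0 := by rw [sub_pow_char_pow, one_pow, ← ha]; ring
    simp [sub_eq_zero.1 (pow_eq_zero_iff (by norm_num) |>.1 h4)]

theorem potents_five_add_potents_ne_univ_of_char_two (hF : ringChar F = 2) {d k : ℕ}
    (hd : Fintype.card F - 1 = d * k) (hk : k ≠ 1) (hq : 4 < Fintype.card F) :
    potents F 5 + potents F (d + 1) ≠ univ := by
  intro huniv
  have hodd : Odd (d * k) := by
    rw [← hd]
    exact Nat.Even.sub_odd Fintype.card_pos
      (Nat.even_iff.2 (FiniteField.even_card_of_char_two hF)) odd_one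
  obtain ⟨l, rfl⟩ := (Nat.odd_mul.1 hodd).2
  have hk3 : 3 ≤ 2 * l + 1 := by omega
  have hd0 : 0 < d := by grind
  have hcover := card_add_le (s := potents F 5) (t := potents F (d + 1))
  rw [huniv, card_univ, card_potents_succ hd0] at hcover
  have h2 := (card_le_card (potents_five_subset_of_char_two hF)).trans card_le_two
  have hcard := hcover.trans (Nat.mul_le_mul h2 (Nat.add_le_add_right (card_nthRootsFinset_le d) 1))
  have hdk := Nat.mul_le_mul_left d hk3
  omega

theorem potents_five_add_potents_ne_univ {n : ℕ} (hq : 47 ^ 2 ≤ Fintype.card F)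
    (hn : ¬ Fintype.card F - 1 ∣ n - 1) : potents F 5 + potents F n ≠ univ := by
  have hn0 : n ≠ 0 := by
    rintro rfl
    exact hn (dvd_zero _)
  obtain ⟨k, hk⟩ := (n - 1).gcd_dvd_right (Fintype.card F - 1)
  have hk1 : k ≠ 1 := by
    rintro rfl
    refine hn ?_
    rw [hk, mul_one]
    exact Nat.gcd_dvd_left _ _
  intro h
  refine (?_ : potents F 5 + potents F ((n - 1).gcd (Fintype.card F - 1) + 1) ≠ univ)
    (univ_subset_iff.1 (h ▸ add_subset_add_left (potents_subset_potents_gcd hn0)))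
  by_cases hF : ringChar F = 2
  · exact potents_five_add_potents_ne_univ_of_char_two hF hk hk1 (lt_of_lt_of_le (by norm_num) hq)
  rcases Nat.even_or_odd' k with ⟨l, rfl | rfl⟩
  · exact potents_five_add_potents_ne_univ_of_even hF hq hk
  rcases (by omega : l = 1 ∨ 2 ≤ l) with rfl | hl
  · exact potents_five_add_potents_ne_univ_of_three hF hq hk
  · exact potents_five_add_potents_ne_univ_of_five_le hq hk (by omega)

end Potents

theorem not_sum_of_five_potent_and_n_potent_of_large_general {F : Type*} [Field F] [Fintype F]
    (hq : 47 ^ 2 ≤ Fintype.card F) {n : ℕ} (hn : ¬ Fintype.card F - 1 ∣ n - 1) :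
    ¬ ∀ γ : F, ∃ a b : F, a ^ 5 = a ∧ b ^ n = b ∧ a + b = γ := by
  classical
  refine fun h => potents_five_add_potents_ne_univ hq hn (eq_univ_of_forall fun γ => ?_)
  obtain ⟨a, b, ha, hb, rfl⟩ := h γ
  exact add_mem_add (mem_filter_univ _ |>.2 ha) (mem_filter_univ _ |>.2 hb)

/-- If `q > 2809` is a prime power, then for every `n` with `1 < n < q` and
`(n-1) ∣ (q-1)`, not every element of the finite field with `q` elements is the sum
of a `5`-potent and an `n`-potent. -/
theorem not_sum_of_five_potent_and_n_potent_of_large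
    (q : ℕ) (hq : IsPrimePow q) (hq' : 2809 < q)
    (F : Type*) [Field F] [Fintype F] (hF : Fintype.card F = q) :
    ∀ n : ℕ, 1 < n → n < q → (n - 1) ∣ (q - 1) →
      ¬ (∀ γ : F, ∃ a b : F, a ^ 5 = a ∧ b ^ n = b ∧ a + b = γ) := by
  intro n hn hnq _
  subst hF
  exact not_sum_of_five_potent_and_n_potent_of_large_general (by omega)
    (Nat.not_dvd_of_pos_of_lt (by omega) (by omega))
end

section
/- Let q be a prime power with q ≡ 1 (mod 4) and let n be the integer with n - 1 = (q-1)/2. If q > 2809, then not every element of F_q can be written as the sum of a 5-potent element and an n-potent element, i.e., C_5 + C_n ≠ F_q. -/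
/-!
Let `i ^ 2 = -1` and let `χ` be the quadratic character. The `5`-potents are `0, 1, i, -1, -i` and
the `n`-potents are the squares, so it suffices to find `x` with `χ (x - r) = -1` for each of the
five `r`. If there is none, then `∑ x, ∏ r, (1 - χ (x - r))` has nonzero terms only at the five
points themselves and is at most `5 * 2 ^ 5`. On the other hand, expand it into sums over `x` of
products of values of `χ`. Multiplication by `i`, inversion and `x ↦ x ^ 2` reduce these to three
cubic sums and one quintic sum, and the whole expression to `q - 15` up to five signed cubic sums,
chosen according to the value of `χ i`, and the quintic sum.

The remaining sums are bounded by Stepanov's method. Put `e = (q - 1) / 2`. A nonzero polynomial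
`A + B f ^ e`, with `A` and `B` combinations of the `X ^ (q j + d)` for small `j` and `d`, is made
to vanish to order `l` wherever `f` is a nonzero square, and its degree then bounds the number of
these points. With `τ = (X ^ q - X) / f` one has `X ^ q = X + f τ` and `f ^ q = f E(τ)` for a
polynomial `E` whose degrees do not depend on `q`. As `τ` vanishes at those points, it is enough
that a bivariate polynomial, whose degree in `X` does not grow with `q`, be divisible by `T ^ l`,
which is a linear system for the coefficients of `A` and `B`.
-/

open Polynomial

/-- The coefficient of `T ^ k` in the bivariate polynomial `P` has degree at most `c + w * k` in the
inner variable. Such bounds are additive in `c` under multiplication. -/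
def CoeffNatDegreeLE {R : Type*} [Semiring R] (c w : ℕ) (P : R[X][X]) : Prop :=
  ∀ k, (P.coeff k).natDegree ≤ c + w * k

namespace CoeffNatDegreeLE

variable {R : Type*} [Semiring R] {c c' w : ℕ} {P Q : R[X][X]}

theorem mono (hP : CoeffNatDegreeLE c w P) (h : c ≤ c') : CoeffNatDegreeLE c' w P :=
  fun k => (hP k).trans (by gcongr)

theorem add (hP : CoeffNatDegreeLE c w P) (hQ : CoeffNatDegreeLE c w Q) :
    CoeffNatDegreeLE c w (P + Q) := fun k => by
  rw [coeff_add]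
  exact natDegree_add_le_of_degree_le (hP k) (hQ k)

theorem sum {ι : Type*} {s : Finset ι} {P : ι → R[X][X]}
    (h : ∀ i ∈ s, CoeffNatDegreeLE c w (P i)) : CoeffNatDegreeLE c w (∑ i ∈ s, P i) := fun k => by
  rw [finsetSum_coeff]
  exact natDegree_sum_le_of_forall_le _ _ fun i hi => h i hi k

theorem mul (hP : CoeffNatDegreeLE c w P) (hQ : CoeffNatDegreeLE c' w Q) :
    CoeffNatDegreeLE (c + c') w (P * Q) := fun k => by
  rw [coeff_mul]
  refine natDegree_sum_le_of_forall_le _ _ fun x hx => ?_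
  calc (P.coeff x.1 * Q.coeff x.2).natDegree ≤ (c + w * x.1) + (c' + w * x.2) :=
        natDegree_mul_le.trans (add_le_add (hP _) (hQ _))
    _ = c + c' + w * k := by rw [← Finset.HasAntidiagonal.mem_antidiagonal.mp hx]; ring

theorem C_mul_X_pow {p : R[X]} {k : ℕ} (h : p.natDegree ≤ c + w * k) :
    CoeffNatDegreeLE c w (C p * X ^ k) := fun j => by
  rw [coeff_C_mul_X_pow]
  split_ifs with hj
  · rwa [hj]
  · simp

theorem const {p : R[X]} (h : p.natDegree ≤ c) : CoeffNatDegreeLE c w (C p) := by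
  simpa using C_mul_X_pow (p := p) (c := c) (w := w) (k := 0) (by simpa using h)

theorem one : CoeffNatDegreeLE 0 w (1 : R[X][X]) :=
  const (p := 1) natDegree_one.le

theorem pow (hP : CoeffNatDegreeLE c w P) (n : ℕ) : CoeffNatDegreeLE (n * c) w (P ^ n) := by
  induction n with
  | zero => simpa using one
  | succ n ih => simpa only [pow_succ, add_mul, one_mul] using ih.mul hP

end CoeffNatDegreeLE

section TaylorQuotient

theorem hasseDeriv_map {R S : Type*} [Semiring R] [Semiring S] (ψ : R →+* S) (k : ℕ) (f : R[X]) :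
    hasseDeriv k (f.map ψ) = (hasseDeriv k f).map ψ := by
  ext n
  simp [hasseDeriv_coeff]

theorem eval₂_add_eq_sum_hasseDeriv {R S : Type*} [Semiring R] [CommSemiring S] (ψ : R →+* S)
    (f : R[X]) (x y : S) :
    f.eval₂ ψ (x + y) =
      ∑ k ∈ Finset.range (f.natDegree + 1), (hasseDeriv k f).eval₂ ψ x * y ^ k := by
  have hdeg : (taylor x (f.map ψ)).natDegree < f.natDegree + 1 := by
    rw [natDegree_taylor]
    exact Nat.lt_succ_of_le natDegree_map_le
  rw [← eval_map, add_comm, ← taylor_eval, eval_eq_sum_range' hdeg]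
  simp only [taylor_coeff, hasseDeriv_map, eval_map]

variable {R : Type*} [CommSemiring R]

/-- The polynomial `E` in a new variable `T` such that `f(X + f T) = f · E(T)`. -/
noncomputable def taylorQuotient (f : R[X]) : R[X][X] :=
  1 + ∑ k ∈ Finset.range f.natDegree, C (hasseDeriv (k + 1) f * f ^ k) * X ^ (k + 1)

theorem mul_eval₂_taylorQuotient {S : Type*} [CommSemiring S] (φ : R[X] →+* S) (f : R[X]) (τ : S) :
    φ f * (taylorQuotient f).eval₂ φ τ = f.eval₂ (φ.comp C) (φ X + φ f * τ) := by
  have heval (g : R[X]) : g.eval₂ (φ.comp C) (φ X) = φ g := by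
    rw [← hom_eval₂, eval₂_C_X]
  rw [eval₂_add_eq_sum_hasseDeriv, Finset.sum_range_succ']
  simp only [taylorQuotient, heval, eval₂_add, eval₂_one, eval₂_finsetSum, eval₂_mul, eval₂_C,
    eval₂_pow, eval₂_X, map_mul, map_pow, hasseDeriv_zero', pow_zero, mul_one, mul_add,
    Finset.mul_sum]
  rw [add_comm]
  exact congrArg (· + φ f) (Finset.sum_congr rfl fun k _ => by ring)

theorem coeffNatDegreeLE_taylorQuotient (f : R[X]) :
    CoeffNatDegreeLE 0 (f.natDegree - 1) (taylorQuotient f) := by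
  refine .add .one (.sum fun k hk => .C_mul_X_pow ?_)
  obtain ⟨m, hm⟩ : ∃ m, f.natDegree = k + 1 + m :=
    Nat.exists_eq_add_of_le (Finset.mem_range.mp hk)
  calc (hasseDeriv (k + 1) f * f ^ k).natDegree
      ≤ (f.natDegree - (k + 1)) + k * f.natDegree :=
        natDegree_mul_le.trans (add_le_add (natDegree_hasseDeriv_le f _) natDegree_pow_le)
    _ = 0 + (f.natDegree - 1) * (k + 1) := by
        rw [hm, show k + 1 + m - (k + 1) = m by omega, show k + 1 + m - 1 = k + m by omega]
        ring

end TaylorQuotient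

section BlockPolynomial

variable {J D q : ℕ}

/-- The polynomial with coefficient `a (j, d)` at `X ^ (q * j + d)`; these exponents are distinct
when `D ≤ q`. -/
noncomputable def blockPolynomial {R : Type*} [Semiring R] (q : ℕ) (a : Fin J × Fin D → R) : R[X] :=
  ∑ p, C (a p) * X ^ (q * p.1 + p.2 : ℕ)

/-- The lift of `blockPolynomial q a` to two variables obtained by replacing `X ^ q` with
`X + f T`. The two agree when `T` takes the value `(X ^ q - X) / f`, but the degree of the lift
in `X` does not grow with `q`. -/
noncomputable def blockLift {R : Type*} [Semiring R] (f : R[X]) (a : Fin J × Fin D → R) : R[X][X] :=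
  ∑ p, C (C (a p)) * (C (X ^ (p.2 : ℕ)) * (C X + C f * X) ^ (p.1 : ℕ))

section Semiring

variable {R : Type*} [Semiring R]

theorem natDegree_blockPolynomial_le (a : Fin J × Fin D → R) :
    (blockPolynomial q a).natDegree ≤ q * (J - 1) + D := by
  refine natDegree_sum_le_of_forall_le _ _ fun p _ => (natDegree_C_mul_X_pow_le _ _).trans ?_
  have hj : (p.1 : ℕ) ≤ J - 1 := Nat.le_sub_one_of_lt p.1.2
  gcongr
  exact p.2.2.le

theorem coeff_blockPolynomial (hD : D ≤ q) (a : Fin J × Fin D → R) (p : Fin J × Fin D) :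
    (blockPolynomial q a).coeff (q * p.1 + p.2) = a p := by
  rw [blockPolynomial, finsetSum_coeff, Finset.sum_eq_single p]
  · simp
  · intro r _ hrp
    rw [coeff_C_mul_X_pow, if_neg]
    intro h
    have hp : (p.2 : ℕ) < q := p.2.2.trans_le hD
    have hr : (r.2 : ℕ) < q := r.2.2.trans_le hD
    have hq : 0 < q := hp.pos
    have hdiv := congrArg (· / q) h
    have hmod := congrArg (· % q) h
    simp only [Nat.mul_add_div hq, Nat.div_eq_of_lt hp, Nat.div_eq_of_lt hr, Nat.mul_add_mod,
      Nat.mod_eq_of_lt hp, Nat.mod_eq_of_lt hr, add_zero] at hdiv hmod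
    exact hrp (Prod.ext (Fin.ext hdiv.symm) (Fin.ext hmod.symm))
  · simp

theorem blockPolynomial_ne_zero (hD : D ≤ q) {a : Fin J × Fin D → R} (ha : a ≠ 0) :
    blockPolynomial q a ≠ 0 := by
  contrapose! ha
  ext p
  rw [← coeff_blockPolynomial hD a p, ha, coeff_zero, Pi.zero_apply]

theorem exists_natDegree_blockPolynomial {a : Fin J × Fin D → R} (h : blockPolynomial q a ≠ 0) :
    ∃ p : Fin J × Fin D, (blockPolynomial q a).natDegree = q * p.1 + p.2 := by
  by_contra! hne
  refine leadingCoeff_ne_zero.mpr h ?_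
  rw [leadingCoeff]
  generalize (blockPolynomial q a).natDegree = n at hne
  rw [blockPolynomial, finsetSum_coeff]
  refine Finset.sum_eq_zero fun p _ => ?_
  rw [coeff_C_mul_X_pow, if_neg (hne p)]

theorem coeffNatDegreeLE_blockLift (f : R[X]) (a : Fin J × Fin D → R) :
    CoeffNatDegreeLE (D - 1 + (J - 1)) (f.natDegree - 1) (blockLift f a) := by
  refine .sum fun p _ => ?_
  have hbase : CoeffNatDegreeLE 1 (f.natDegree - 1) (C X + C f * X) := by
    simpa only [pow_one] using
      CoeffNatDegreeLE.const natDegree_X_le |>.add (.C_mul_X_pow (p := f) (k := 1) (by omega))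
  have hcoeff : CoeffNatDegreeLE 0 (f.natDegree - 1) (C (C (a p))) := .const (natDegree_C _).le
  have hpow : CoeffNatDegreeLE (p.2 : ℕ) (f.natDegree - 1) (C (X ^ (p.2 : ℕ)) : R[X][X]) :=
    .const (natDegree_X_pow_le _)
  exact (hcoeff.mul (hpow.mul (hbase.pow p.1))).mono (by omega)

end Semiring

theorem eval₂_blockLift {R S : Type*} [CommSemiring R] [CommSemiring S] (φ : R[X] →+* S) {f : R[X]}
    {τ : S} (hτ : φ X + φ f * τ = φ X ^ q) (a : Fin J × Fin D → R) :
    (blockLift f a).eval₂ φ τ = φ (blockPolynomial q a) := by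
  simp only [blockLift, blockPolynomial, eval₂_finsetSum, eval₂_mul, eval₂_C, eval₂_pow, eval₂_add,
    eval₂_X, hτ, map_sum, map_mul, map_pow, pow_add, pow_mul, mul_comm (φ X ^ ((_ : Fin D) : ℕ))]

/-- Multiplied by two, the degrees of the two summands are congruent to `2 d` and `2 d' - m`
modulo `q` with `d, d' < D`, so they cannot agree for odd `m`. -/
theorem blockPolynomial_add_mul_pow_ne_zero {F : Type*} [Field F] {e : ℕ} {f : F[X]}
    (hodd : Odd f.natDegree) (hq : q = 2 * e + 1) (hD : 2 * D + f.natDegree ≤ q)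
    {a b : Fin J × Fin D → F} (hab : a ≠ 0 ∨ b ≠ 0) :
    blockPolynomial q a + blockPolynomial q b * f ^ e ≠ 0 := by
  have hDq : D ≤ q := by omega
  have hf : f ^ e ≠ 0 := pow_ne_zero _ (by rintro rfl; simp at hodd)
  intro hsum
  have hsum' : blockPolynomial q a = -(blockPolynomial q b * f ^ e) :=
    eq_neg_of_add_eq_zero_left hsum
  have hb : b ≠ 0 := by
    rintro rfl
    exact blockPolynomial_ne_zero hDq (hab.resolve_right (by simp))
      (by simpa [blockPolynomial] using hsum)
  have hB := blockPolynomial_ne_zero hDq hb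
  have hA : blockPolynomial q a ≠ 0 := hsum' ▸ neg_ne_zero.mpr (mul_ne_zero hB hf)
  obtain ⟨⟨j, d⟩, hdegA⟩ := exists_natDegree_blockPolynomial hA
  obtain ⟨⟨j', d'⟩, hdegB⟩ := exists_natDegree_blockPolynomial hB
  have hdeg : q * j + d = q * j' + d' + e * f.natDegree := by
    rw [← hdegA, ← hdegB, hsum', natDegree_neg, natDegree_mul hB hf, natDegree_pow]
  have hmul : (q : ℤ) * (2 * j - 2 * j' - f.natDegree) = 2 * d' - 2 * d - f.natDegree := by
    zify at hdeg hq
    linear_combination 2 * hdeg - (f.natDegree : ℤ) * hq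
  have hzero : (2 * d' - 2 * d - f.natDegree : ℤ) = 0 :=
    Int.eq_zero_of_abs_lt_dvd (Dvd.intro _ hmul) (by rw [abs_lt]; constructor <;> omega)
  obtain ⟨n, hn⟩ := hodd
  omega

end BlockPolynomial

section Stepanov

/-- The coefficients to be annihilated form a linear system with more unknowns than equations. -/
theorem exists_X_pow_dvd_sum_C_C_mul {F ι : Type*} [Field F] [Fintype ι] (w : ι → F[X][X])
    {l M : ℕ} (hw : ∀ i, ∀ k < l, ((w i).coeff k).natDegree < M) (hcard : l * M < Fintype.card ι) :
    ∃ c : ι → F, c ≠ 0 ∧ X ^ l ∣ ∑ i, C (C (c i)) * w i := by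
  let L : (ι → F) →ₗ[F] (Fin l × Fin M → F) :=
    Matrix.mulVecLin (.of fun k i => ((w i).coeff k.1).coeff k.2)
  have hL : L.ker ≠ ⊥ := LinearMap.ker_ne_bot_of_finrank_lt (by simpa using hcard)
  obtain ⟨c, hc, hc0⟩ := (Submodule.ne_bot_iff _).mp hL
  refine ⟨c, hc0, X_pow_dvd_iff.mpr fun k hk => ?_⟩
  ext n
  simp only [finsetSum_coeff, coeff_C_mul, coeff_zero]
  by_cases hn : n < M
  · simpa [L, Matrix.mulVec, dotProduct, mul_comm] using
      congrFun (LinearMap.mem_ker.mp hc) (⟨k, hk⟩, ⟨n, hn⟩)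
  · refine Finset.sum_eq_zero fun i _ => ?_
    rw [coeff_eq_zero_of_natDegree_lt ((hw i k hk).trans_le (not_lt.mp hn)), mul_zero]

theorem exists_X_pow_dvd_blockLift_add {F : Type*} [Field F] (f : F[X]) (m : ℕ) {J D l : ℕ}
    (hcount : l * (D + J + (f.natDegree - 1) * l) < 2 * J * D) :
    ∃ a b : Fin J × Fin D → F, (a ≠ 0 ∨ b ≠ 0) ∧
      X ^ l ∣ blockLift f a + blockLift f b * taylorQuotient f ^ m := by
  have hJ : 0 < J := Nat.pos_of_ne_zero (by rintro rfl; simp at hcount)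
  have hD : 0 < D := Nat.pos_of_ne_zero (by rintro rfl; simp at hcount)
  let lift (p : Fin J × Fin D) : F[X][X] := blockLift f (Pi.single p 1)
  let w : (Fin J × Fin D) ⊕ (Fin J × Fin D) → F[X][X] :=
    Sum.elim lift fun p => lift p * taylorQuotient f ^ m
  have hlift (a : Fin J × Fin D → F) : blockLift f a = ∑ p, C (C (a p)) * lift p := by
    simp [lift, blockLift, Pi.single_apply]
  have hdeg (i) : CoeffNatDegreeLE (D - 1 + (J - 1)) (f.natDegree - 1) (w i) := by
    rcases i with p | p
    · exact coeffNatDegreeLE_blockLift f _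
    · exact ((coeffNatDegreeLE_blockLift f _).mul
        ((coeffNatDegreeLE_taylorQuotient f).pow m)).mono (by simp)
  obtain ⟨c, hc0, hc⟩ := exists_X_pow_dvd_sum_C_C_mul w (l := l)
    (M := D + J + (f.natDegree - 1) * l)
    (fun i k hk => (hdeg i k).trans_lt <| by
      have := Nat.mul_le_mul_left (f.natDegree - 1) hk.le
      omega)
    (by simpa [← two_mul, ← mul_assoc] using hcount)
  refine ⟨fun p => c (.inl p), fun p => c (.inr p), ?_, ?_⟩
  · contrapose! hc0
    ext (p | p)
    exacts [congrFun hc0.1 p, congrFun hc0.2 p]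
  · simpa [hlift, w, Fintype.sum_sum_type, Finset.sum_mul, mul_assoc] using hc

variable {F : Type*} [Field F] [Fintype F] {e : ℕ} {f : F[X]}

/-- As `f ^ q = f · E(τ)`, the value `E(τ)` is the square of `g = f ^ e`. Since `g ^ q = 1`, its
power `g ^ (2 * (e + 1)) = g ^ (q + 1)` is `g`. -/
theorem eval₂_taylorQuotient_pow {S : Type*} [CommRing S] (φ : F[X] →+* S) {τ : S}
    (hq : Fintype.card F = 2 * e + 1) (hτ : φ X + φ f * τ = φ X ^ Fintype.card F)
    (hf : IsUnit (φ f)) (hfe : (φ f ^ e) ^ Fintype.card F = 1) :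
    (taylorQuotient f ^ (e + 1)).eval₂ φ τ = φ f ^ e := by
  have hfrob : φ f * (taylorQuotient f).eval₂ φ τ = φ f ^ Fintype.card F := by
    rw [mul_eval₂_taylorQuotient, hτ, ← map_pow, ← map_pow, ← hom_eval₂,
      ← FiniteField.expand_card f, coe_expand]
  have hsq : (taylorQuotient f).eval₂ φ τ = (φ f ^ e) ^ 2 := by
    refine hf.mul_left_cancel (hfrob.trans ?_)
    rw [hq]
    ring
  calc (taylorQuotient f ^ (e + 1)).eval₂ φ τ = (φ f ^ e) ^ Fintype.card F * φ f ^ e := by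
        rw [eval₂_pow, hsq, hq]
        ring
    _ = φ f ^ e := by rw [hfe, one_mul]

theorem X_sub_C_pow_card_dvd_pow_card_sub_one {p : F[X]} {α : F} (hp : p.eval α = 1) :
    (X - C α) ^ Fintype.card F ∣ p ^ Fintype.card F - 1 := by
  have hroot : X - C α ∣ p - 1 := dvd_iff_isRoot.mpr (by simp [hp])
  calc (X - C α) ^ Fintype.card F ∣ (p - 1) ^ Fintype.card F := pow_dvd_pow_of_dvd hroot _
    _ = p ^ Fintype.card F - 1 := by
      rw [← FiniteField.expand_card, ← FiniteField.expand_card, map_sub, map_one]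

theorem X_sub_C_pow_dvd_blockPolynomial_add {J D l : ℕ} {a b : Fin J × Fin D → F}
    (hq : Fintype.card F = 2 * e + 1) (hl : l ≤ Fintype.card F)
    (hab : X ^ l ∣ blockLift f a + blockLift f b * taylorQuotient f ^ (e + 1)) {α : F}
    (hα : f.eval α ^ e = 1) :
    (X - C α) ^ l ∣
      blockPolynomial (Fintype.card F) a + blockPolynomial (Fintype.card F) b * f ^ e := by
  set q := Fintype.card F
  have he : e ≠ 0 := by have := Fintype.one_lt_card (α := F); omega
  let I : Ideal F[X] := Ideal.span {X - C α}
  have : I.IsMaximal := PrincipalIdealRing.isMaximal_of_irreducible (irreducible_X_sub_C α)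
  let φ := Ideal.Quotient.mk (I ^ l)
  have hφ {p : F[X]} : φ p = 0 ↔ (X - C α) ^ l ∣ p := by
    rw [Ideal.Quotient.eq_zero_iff_mem, Ideal.span_singleton_pow, Ideal.mem_span_singleton]
  have hf : IsUnit (φ f) := by
    refine Ideal.Quotient.isUnit_mk_pow_of_notMem I fun hmem => ?_
    have hroot : f.eval α = 0 := dvd_iff_isRoot.mp (Ideal.mem_span_singleton.mp hmem)
    simp [hroot, he] at hα
  have hfe : (φ f ^ e) ^ q = 1 := by
    rw [← sub_eq_zero, ← map_pow, ← map_pow, ← map_one φ, ← map_sub, hφ]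
    exact (pow_dvd_pow _ hl).trans
      (X_sub_C_pow_card_dvd_pow_card_sub_one (by rw [eval_pow, hα]))
  obtain ⟨v, hv⟩ := hf.exists_right_inv
  let τ := φ (X ^ q - X) * v
  have hτ : φ X + φ f * τ = φ X ^ q := by
    rw [← map_pow]
    linear_combination φ (X ^ q - X) * hv + map_sub φ (X ^ q) X
  have hτl : τ ^ l = 0 := by
    have hroot : X - C α ∣ X ^ q - X := dvd_iff_isRoot.mpr (by simp [q, FiniteField.pow_card])
    rw [mul_pow, ← map_pow, hφ.mpr (pow_dvd_pow_of_dvd hroot l), zero_mul]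
  have heval : (blockLift f a + blockLift f b * taylorQuotient f ^ (e + 1)).eval₂ φ τ =
      φ (blockPolynomial q a + blockPolynomial q b * f ^ e) := by
    rw [eval₂_add, eval₂_mul, eval₂_blockLift φ hτ, eval₂_blockLift φ hτ,
      eval₂_taylorQuotient_pow φ hq hτ hf hfe, map_add, map_mul, map_pow]
  have hdvd := eval₂_dvd φ τ hab
  rw [eval₂_X_pow, hτl, zero_dvd_iff, heval] at hdvd
  exact hφ.mp hdvd

theorem mul_card_filter_eval_pow_eq_one_le [DecidableEq F] {J D l : ℕ}
    (hodd : Odd f.natDegree) (hq : Fintype.card F = 2 * e + 1)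
    (hcount : l * (D + J + (f.natDegree - 1) * l) < 2 * J * D)
    (hD : 2 * D + f.natDegree ≤ Fintype.card F) :
    l * (Finset.univ.filter fun α : F => f.eval α ^ e = 1).card ≤
      Fintype.card F * (J - 1) + D + e * f.natDegree := by
  have hl : l ≤ Fintype.card F := by
    by_contra! hlt
    have hJ : J ≤ D + J + (f.natDegree - 1) * l := by omega
    nlinarith [Nat.mul_le_mul (show 2 * D ≤ l by omega) hJ]
  obtain ⟨a, b, hab, hlift⟩ := exists_X_pow_dvd_blockLift_add f (e + 1) hcount
  have hdvd : ∏ α with f.eval α ^ e = 1, (X - C α) ^ l ∣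
      blockPolynomial (Fintype.card F) a + blockPolynomial (Fintype.card F) b * f ^ e :=
    Finset.prod_dvd_of_coprime
      (fun α _ β _ hαβ => (pairwise_coprime_X_sub_C Function.injective_id hαβ).pow)
      fun α hα => X_sub_C_pow_dvd_blockPolynomial_add hq hl hlift (Finset.mem_filter.mp hα).2
  calc l * (Finset.univ.filter fun α : F => f.eval α ^ e = 1).card
      = (∏ α with f.eval α ^ e = 1, (X - C α) ^ l).natDegree := by
        rw [natDegree_prod _ _ fun α _ => pow_ne_zero _ (X_sub_C_ne_zero α)]
        simp [natDegree_pow, mul_comm]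
    _ ≤ _ := natDegree_le_of_dvd hdvd (blockPolynomial_add_mul_pow_ne_zero hodd hq hD hab)
    _ ≤ Fintype.card F * (J - 1) + D + e * f.natDegree :=
      natDegree_add_le_of_degree_le
        ((natDegree_blockPolynomial_le a).trans (Nat.le_add_right _ _))
        (natDegree_mul_le.trans
          (add_le_add (natDegree_blockPolynomial_le b) natDegree_pow_le))

end Stepanov

section QuadraticCharacter

variable {F : Type*} [Field F] [Fintype F] [DecidableEq F]

theorem mul_sum_quadraticChar_eval_le (hF : ringChar F ≠ 2) {J D l : ℕ} {f : F[X]}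
    (hodd : Odd f.natDegree) (hcount : l * (D + J + (f.natDegree - 1) * l) < 2 * J * D)
    (hD : 2 * D + f.natDegree ≤ Fintype.card F) :
    l * ∑ x, quadraticChar F (f.eval x) ≤
      Fintype.card F * (2 * J - 2 + f.natDegree - l) + 2 * D + f.natDegree * (l - 1) := by
  obtain ⟨e, hq⟩ : Odd (Fintype.card F) :=
    Nat.odd_iff.mpr (FiniteField.odd_card_of_char_ne_two hF)
  have he : e ≠ 0 := by have := Fintype.one_lt_card (α := F); omega
  have hf : f ≠ 0 := by rintro rfl; simp at hodd
  set N := (Finset.univ.filter fun x : F => f.eval x ^ e = 1).card with hN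
  set Z := (Finset.univ.filter fun x : F => f.eval x = 0).card with hZ
  have hZ_le : Z ≤ f.natDegree := by
    refine (Finset.card_le_card fun x hx => ?_).trans
      ((Multiset.toFinset_card_le f.roots).trans (card_roots' f))
    simpa [hf] using hx
  have hN_le : (l * N : ℤ) ≤ Fintype.card F * (J - 1) + D + e * f.natDegree := by
    have hJ : 1 ≤ J := Nat.one_le_iff_ne_zero.mpr (by rintro rfl; simp at hcount)
    have := mul_card_filter_eval_pow_eq_one_le hodd hq hcount hD
    zify [hJ] at this
    exact this
  have hpoint (x : F) : quadraticChar F (f.eval x) =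
      2 * (if f.eval x ^ e = 1 then 1 else 0) - 1 + if f.eval x = 0 then 1 else 0 := by
    by_cases h0 : f.eval x = 0
    · simp [h0, he]
    · rw [quadraticChar_eq_pow_of_char_ne_two hF h0, show Fintype.card F / 2 = e by omega]
      split_ifs <;> simp_all
  have hsum : ∑ x, quadraticChar F (f.eval x) = 2 * N - Fintype.card F + Z := by
    simp only [hpoint, Finset.sum_add_distrib, Finset.sum_sub_distrib, ← Finset.mul_sum,
      Finset.sum_boole, Finset.sum_const, Finset.card_univ, nsmul_eq_mul, mul_one, hN, hZ]
  rw [hsum]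
  have hlZ : (l * Z : ℤ) ≤ l * f.natDegree := by gcongr
  zify at hq
  linear_combination 2 * hN_le + hlZ - (f.natDegree : ℤ) * hq

theorem mul_abs_sum_quadraticChar_eval_le (hF : ringChar F ≠ 2) {J D l : ℕ} {f : F[X]}
    (hodd : Odd f.natDegree) (hcount : l * (D + J + (f.natDegree - 1) * l) < 2 * J * D)
    (hD : 2 * D + f.natDegree ≤ Fintype.card F) :
    l * |∑ x, quadraticChar F (f.eval x)| ≤
      Fintype.card F * (2 * J - 2 + f.natDegree - l) + 2 * D + f.natDegree * (l - 1) := by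
  obtain ⟨c, hc⟩ := quadraticChar_exists_neg_one hF
  have hc0 : c ≠ 0 := by rintro rfl; simp at hc
  have hdeg : (C c * f).natDegree = f.natDegree := natDegree_C_mul hc0
  have hle := mul_sum_quadraticChar_eval_le hF hodd hcount hD
  have hle_neg := mul_sum_quadraticChar_eval_le hF (f := C c * f) (hdeg ▸ hodd)
    (hdeg ▸ hcount) (hdeg ▸ hD)
  simp only [hdeg, eval_mul, eval_C, map_mul, hc, neg_one_mul, Finset.sum_neg_distrib] at hle_neg
  rcases abs_choice (∑ x, quadraticChar F (f.eval x)) with h | h <;> rwa [h]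

theorem sum_comp_sq (hF : ringChar F ≠ 2) (g : F → ℤ) :
    ∑ x, g (x ^ 2) = ∑ y, (quadraticChar F y + 1) * g y := by
  rw [← Finset.sum_fiberwise Finset.univ (fun x : F => x ^ 2)]
  refine Finset.sum_congr rfl fun y _ => ?_
  rw [Finset.sum_congr rfl fun x hx => congrArg g (Finset.mem_filter.mp hx).2, Finset.sum_const,
    nsmul_eq_mul, ← quadraticChar_card_sqrts hF]
  congr 3
  ext x
  simp

end QuadraticCharacter

section ShiftedCharSum

/-- The sum over `x` of the product of the values `χ (x - r)`, for `r` in `T`. -/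
def shiftedCharSum {F R : Type*} [Field F] [Fintype F] [CommRing R] (χ : MulChar F R)
    (T : Multiset F) : R :=
  ∑ x, (T.map fun r => χ (x - r)).prod

section MulChar

variable {F R : Type*} [Field F] [Fintype F] [CommRing R] (χ : MulChar F R)

theorem shiftedCharSum_zero : shiftedCharSum χ 0 = Fintype.card F := by
  simp [shiftedCharSum]

theorem shiftedCharSum_map_add (a : F) (T : Multiset F) :
    shiftedCharSum χ (T.map (a + ·)) = shiftedCharSum χ T := by
  rw [shiftedCharSum, ← Equiv.sum_comp (Equiv.addLeft a)]
  simp [shiftedCharSum]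

theorem shiftedCharSum_map_mul {a : F} (ha : a ≠ 0) (T : Multiset F) :
    shiftedCharSum χ (T.map (a * ·)) = χ a ^ T.card * shiftedCharSum χ T := by
  rw [shiftedCharSum, ← Equiv.sum_comp (Equiv.mulLeft₀ a ha)]
  simp [shiftedCharSum, ← mul_sub, Multiset.prod_map_mul, Finset.mul_sum]

theorem shiftedCharSum_singleton [IsDomain R] {χ : MulChar F R} (hχ : χ ≠ 1) (r : F) :
    shiftedCharSum χ {r} = 0 := by
  rw [← MulChar.sum_eq_zero_of_ne_one hχ, ← (Equiv.subRight r).sum_comp]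
  simp [shiftedCharSum]

/-- Substitute `x⁻¹` for `x`. -/
theorem shiftedCharSum_zero_cons {χ : MulChar F R} {T : Multiset F} (hχ : χ ^ (T.card + 1) = 1)
    (hT : 0 ∉ T) :
    shiftedCharSum χ (0 ::ₘ T) =
      (T.map fun r => χ (-r)).prod * shiftedCharSum χ (T.map (·⁻¹)) - 1 := by
  classical
  have hpoint (x : F) : (((0 : F) ::ₘ T).map fun r => χ (x⁻¹ - r)).prod =
      (T.map fun r => χ (-r)).prod * ((T.map (·⁻¹)).map fun r => χ (x - r)).prod -
        if x = 0 then 1 else 0 := by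
    have hfactor {r : F} (hr : r ∈ T) : χ (-r) * χ (x - r⁻¹) = χ (1 - r * x) := by
      have : r ≠ 0 := ne_of_mem_of_not_mem hr hT
      rw [← map_mul]
      congr 1
      field_simp
      ring
    rw [Multiset.map_map, ← Multiset.prod_map_mul]
    simp only [Function.comp_apply]
    rw [Multiset.map_congr rfl fun r hr => hfactor hr, Multiset.map_cons, Multiset.prod_cons]
    rcases eq_or_ne x 0 with rfl | hx
    · simp [χ.map_nonunit not_isUnit_zero]
    · have hχx : χ x⁻¹ ^ (T.card + 1) = 1 := by
        rw [← MulChar.pow_apply' _ (Nat.succ_ne_zero _), hχ,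
          MulChar.one_apply (isUnit_iff_ne_zero.mpr (inv_ne_zero hx))]
      have hfactor' (r : F) : χ (x⁻¹ - r) = χ x⁻¹ * χ (1 - r * x) := by
        rw [← map_mul]
        congr 1
        field_simp
      simp only [hfactor', Multiset.prod_map_mul, Multiset.map_const', Multiset.prod_replicate,
        sub_zero, if_neg hx, ← mul_assoc, ← pow_succ', hχx, one_mul]
  rw [shiftedCharSum, ← Equiv.sum_comp (Equiv.inv F)]
  simp only [Equiv.inv_apply, hpoint, Finset.sum_sub_distrib, ← Finset.mul_sum, shiftedCharSum,
    Finset.sum_ite_eq', Finset.mem_univ, if_true]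

theorem shiftedCharSum_pair [IsDomain R] {χ : MulChar F R} (hχ : χ ≠ 1) (hχ2 : χ ^ 2 = 1) {r s : F}
    (hrs : r ≠ s) : shiftedCharSum χ {r, s} = -1 := by
  have hsr : (0 : F) ∉ ({s - r} : Multiset F) := by simpa [eq_comm, sub_eq_zero] using hrs
  have htranslate : ({r, s} : Multiset F) = (0 ::ₘ {s - r}).map (r + ·) := by simp
  rw [htranslate, shiftedCharSum_map_add, shiftedCharSum_zero_cons (by simpa using hχ2) hsr,
    Multiset.map_singleton (·⁻¹), shiftedCharSum_singleton hχ, mul_zero, zero_sub]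

theorem prod_map_one_sub {α : Type*} (T : Multiset α) (g : α → R) :
    (T.map fun r => 1 - g r).prod =
      (T.powerset.map fun U => (-1) ^ U.card * (U.map g).prod).sum := by
  have hneg (U : Multiset α) : (U.map fun r => -g r).prod = (-1) ^ U.card * (U.map g).prod := by
    simpa using Multiset.prod_map_neg (U.map g)
  simp only [sub_eq_neg_add, Multiset.prod_map_add, hneg, Multiset.map_const',
    Multiset.prod_replicate, one_pow, mul_one, ← Multiset.antidiagonal_map_fst, Multiset.map_map,
    Function.comp_def]

theorem sum_prod_one_sub_eq_sum_shiftedCharSum (T : Multiset F) :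
    ∑ x, (T.map fun r => 1 - χ (x - r)).prod =
      (T.powerset.map fun U => (-1) ^ U.card * shiftedCharSum χ U).sum := by
  simp only [prod_map_one_sub, shiftedCharSum, Finset.mul_sum]
  exact Multiset.sum_map_sum_map _ _

end MulChar

section Quadratic

variable {F : Type*} [Field F] [Fintype F] [DecidableEq F]

theorem shiftedCharSum_add_map_neg (hF : ringChar F ≠ 2) (T : Multiset F) :
    shiftedCharSum (quadraticChar F) (T + T.map (-·)) =
      shiftedCharSum (quadraticChar F) (0 ::ₘ T.map (· ^ 2)) +
        shiftedCharSum (quadraticChar F) (T.map (· ^ 2)) := by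
  have hfactor (x r : F) : quadraticChar F (x - r) * quadraticChar F (x - -r) =
      quadraticChar F (x ^ 2 - r ^ 2) := by
    rw [← map_mul]
    ring_nf
  calc shiftedCharSum (quadraticChar F) (T + T.map (-·))
      = ∑ x : F, (T.map fun r => quadraticChar F (x ^ 2 - r ^ 2)).prod := by
        simp [shiftedCharSum, ← hfactor, Multiset.prod_map_mul]
    _ = ∑ y, (quadraticChar F y + 1) * (T.map fun r => quadraticChar F (y - r ^ 2)).prod :=
        sum_comp_sq hF fun y => (T.map fun r => quadraticChar F (y - r ^ 2)).prod
    _ = _ := by simp [shiftedCharSum, add_mul, Finset.sum_add_distrib]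

theorem mul_abs_shiftedCharSum_le (hF : ringChar F ≠ 2) {J D l : ℕ} {T : Multiset F}
    (hodd : Odd T.card) (hcount : l * (D + J + (T.card - 1) * l) < 2 * J * D)
    (hD : 2 * D + T.card ≤ Fintype.card F) :
    l * |shiftedCharSum (quadraticChar F) T| ≤
      Fintype.card F * (2 * J - 2 + T.card - l) + 2 * D + T.card * (l - 1) := by
  have hdeg := natDegree_multiset_prod_X_sub_C_eq_card T
  have := mul_abs_sum_quadraticChar_eval_le hF (f := (T.map fun r => X - C r).prod)
    (hdeg ▸ hodd) (by rwa [hdeg]) (by rwa [hdeg])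
  simpa [hdeg, shiftedCharSum, eval_multiset_prod, map_multiset_prod] using this

/-- The parameters of Stepanov's bound are chosen nearly optimally for `card F` about `2800`. -/
theorem mul_abs_shiftedCharSum_le_of_card_eq_three (hF : ringChar F ≠ 2)
    (hq : 2285 ≤ Fintype.card F) {T : Multiset F} (hT : T.card = 3) :
    30 * |shiftedCharSum (quadraticChar F) T| ≤ 3 * Fintype.card F + 2369 := by
  have := mul_abs_shiftedCharSum_le hF (l := 30) (J := 16) (D := 1141) (T := T)
    (by rw [hT]; decide) (by rw [hT]; norm_num) (by omega)
  rw [hT] at this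
  push_cast at this
  linarith

theorem mul_abs_shiftedCharSum_le_of_card_eq_five (hF : ringChar F ≠ 2)
    (hq : 2623 ≤ Fintype.card F) {T : Multiset F} (hT : T.card = 5) :
    24 * |shiftedCharSum (quadraticChar F) T| ≤ 5 * Fintype.card F + 2733 := by
  have := mul_abs_shiftedCharSum_le hF (l := 24) (J := 13) (D := 1309) (T := T)
    (by rw [hT]; decide) (by rw [hT]; norm_num) (by omega)
  rw [hT] at this
  push_cast at this
  linarith

theorem sum_prod_one_sub_quadraticChar_le {T : Multiset F}
    (hT : ∀ x, ∃ r ∈ T, x - r = 0 ∨ quadraticChar F (x - r) = 1) :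
    ∑ x, (T.map fun r => 1 - quadraticChar F (x - r)).prod ≤ T.card * 2 ^ T.card := by
  have hterm (x : F) : (T.map fun r => 1 - quadraticChar F (x - r)).prod ≤
      if x ∈ T.toFinset then 2 ^ T.card else 0 := by
    split_ifs with hx
    · calc (T.map fun r => 1 - quadraticChar F (x - r)).prod ≤ (T.map fun _ => (2 : ℤ)).prod := by
            refine Multiset.prod_map_le_prod_map₀ _ _ (fun r _ => ?_) fun r _ => ?_ <;>
              rcases quadraticChar_isQuadratic F (x - r) with h | h | h <;> rw [h] <;> norm_num
        _ = 2 ^ T.card := by simp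
    · obtain ⟨r, hr, hxr⟩ := hT x
      rw [Multiset.mem_toFinset] at hx
      have hχ : quadraticChar F (x - r) = 1 :=
        hxr.resolve_left (sub_ne_zero.mpr (ne_of_mem_of_not_mem hr hx).symm)
      exact (Multiset.prod_eq_zero (Multiset.mem_map.mpr ⟨r, hr, by rw [hχ, sub_self]⟩)).le
  calc ∑ x, (T.map fun r => 1 - quadraticChar F (x - r)).prod
      ≤ ∑ x, if x ∈ T.toFinset then (2 ^ T.card : ℤ) else 0 := Finset.sum_le_sum fun x _ => hterm x
    _ = T.toFinset.card * 2 ^ T.card := by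
      rw [Finset.sum_ite_mem, Finset.univ_inter, Finset.sum_const, nsmul_eq_mul]
    _ ≤ T.card * 2 ^ T.card := by gcongr; exact Multiset.toFinset_card_le T

end Quadratic

end ShiftedCharSum

section FivePotents

theorem triple_eq_cycle {α : Type*} (r s t : α) : ({r, s, t} : Multiset α) = {s, t, r} := by
  simp only [Multiset.insert_eq_cons, ← Multiset.singleton_add]
  abel

variable {F : Type*} [Field F] {i : F}

theorem mem_of_pow_five_eq_self (hi : i * i = -1) {a : F} (ha : a ^ 5 = a) :
    a ∈ ({0, 1, i, -1, -i} : Multiset F) := by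
  have hprod : a * ((a - 1) * ((a - i) * ((a - -1) * (a - -i)))) = 0 := by
    linear_combination ha - (a ^ 3 - a) * hi
  simpa only [mul_eq_zero, sub_eq_zero, Multiset.insert_eq_cons, Multiset.mem_cons,
    Multiset.mem_singleton] using hprod

theorem ne_zero_of_mul_self_eq_neg_one (hi : i * i = -1) : i ≠ 0 := by
  rintro rfl
  simp at hi

theorem nodup_zero_fourthRoots (hF : ringChar F ≠ 2) (hi : i * i = -1) :
    ({0, 1, i, -1, -i} : Multiset F).Nodup := by
  have hneg : (-1 : F) ≠ 1 := Ring.neg_one_ne_one_of_char_ne_two hF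
  have hi0 := ne_zero_of_mul_self_eq_neg_one hi
  have hi1 : i ≠ 1 := by rintro rfl; exact hneg (by rw [← hi, one_mul])
  have him : i ≠ -1 := by rintro rfl; exact hneg (by rw [← hi, neg_mul_neg, one_mul])
  have hi_neg : i ≠ -i := fun h => hi0 (Ring.eq_self_iff_eq_zero_of_char_ne_two hF |>.mp h.symm)
  have h1_neg : 1 ≠ -i := fun h => him (by rw [h, neg_neg])
  simp [hneg.symm, hi0, hi0.symm, hi1.symm, him, hi_neg, h1_neg]

variable [Fintype F] [DecidableEq F]

local notation "W" => shiftedCharSum (quadraticChar F)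

theorem eq_zero_or_quadraticChar_eq_one_of_pow_eq_self (hF : ringChar F ≠ 2) {b : F}
    (hb : b ^ (Fintype.card F / 2 + 1) = b) : b = 0 ∨ quadraticChar F b = 1 := by
  refine or_iff_not_imp_left.mpr fun hb0 => ?_
  have hpow : b ^ (Fintype.card F / 2) = 1 :=
    mul_right_cancel₀ hb0 (by rw [← pow_succ, hb, one_mul])
  rw [quadraticChar_eq_pow_of_char_ne_two hF hb0, if_pos hpow]

theorem quadraticChar_neg_one_eq_one (hi : i * i = -1) : quadraticChar F (-1) = 1 := by
  have hi0 := ne_zero_of_mul_self_eq_neg_one hi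
  rw [← hi, ← sq, quadraticChar_sq_one' hi0]

theorem shiftedCharSum_rotate_three (hi : i ≠ 0) (r s t : F) :
    W {i * r, i * s, i * t} = quadraticChar F i * W {r, s, t} := by
  have := shiftedCharSum_map_mul (quadraticChar F) hi {r, s, t}
  rwa [show Multiset.card {r, s, t} = 2 + 1 from rfl, pow_succ, quadraticChar_sq_one hi,
    one_mul] at this

theorem shiftedCharSum_rotate_four (hi : i ≠ 0) (r s t u : F) :
    W {i * r, i * s, i * t, i * u} = W {r, s, t, u} := by
  have := shiftedCharSum_map_mul (quadraticChar F) hi {r, s, t, u}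
  rwa [show Multiset.card {r, s, t, u} = 2 * 2 from rfl, pow_mul, quadraticChar_sq_one hi,
    one_pow, one_mul] at this

theorem shiftedCharSum_fourthRoots (hF : ringChar F ≠ 2) (hi : i * i = -1) :
    W {1, i, -1, -i} = W {0, 1, -1} - 1 := by
  have hneg : ({1, i, -1, -i} : Multiset F) = {1, i} + ({1, i} : Multiset F).map (-·) := rfl
  have hsq : ({1, i} : Multiset F).map (· ^ 2) = {1, -1} := by simp [sq, hi]
  have hpair : W {1, -1} = -1 :=
    shiftedCharSum_pair (quadraticChar_ne_one hF) (quadraticChar_isQuadratic F).sq_eq_one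
      (Ring.neg_one_ne_one_of_char_ne_two hF).symm
  rw [hneg, shiftedCharSum_add_map_neg hF, hsq, hpair]
  rfl

theorem shiftedCharSum_zero_one_i_neg_one (hi : i * i = -1) :
    W {0, 1, i, -1} = quadraticChar F i * W {1, i, -1} - 1 := by
  have hi0 := ne_zero_of_mul_self_eq_neg_one hi
  have hχ : quadraticChar F ^ 4 = 1 := by
    rw [show 4 = 2 * 2 from rfl, pow_mul, (quadraticChar_isQuadratic F).sq_eq_one, one_pow]
  have hneg : quadraticChar F (-1) = 1 := quadraticChar_neg_one_eq_one hi
  have hprod : (({1, i, -1} : Multiset F).map fun r => quadraticChar F (-r)).prod =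
      quadraticChar F i := by
    rw [Multiset.map_congr rfl fun r _ => by rw [← neg_one_mul, map_mul, hneg, one_mul]]
    simp [-quadraticChar_apply, hneg]
  have hinv : ({1, i, -1} : Multiset F).map (·⁻¹) = {-1 * -1, -1 * i, -1 * 1} := by
    have : i⁻¹ = -i := inv_eq_of_mul_eq_one_right (by rw [mul_neg, hi, neg_neg])
    simp [this]
  have hperm : ({-1, i, 1} : Multiset F) = {1, i, -1} := by
    simp only [Multiset.insert_eq_cons, ← Multiset.singleton_add]
    abel
  calc W {0, 1, i, -1} = quadraticChar F i * W {-1 * -1, -1 * i, -1 * 1} - 1 := by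
        rw [← hprod, ← hinv]
        exact shiftedCharSum_zero_cons hχ (by simp [hi0.symm])
    _ = quadraticChar F i * W {1, i, -1} - 1 := by
        rw [shiftedCharSum_rotate_three (neg_ne_zero.mpr one_ne_zero), hneg, one_mul, hperm]

theorem shiftedCharSum_three_eq (hi : i * i = -1) :
    W {0, i, -i} = quadraticChar F i * W {0, 1, -1} ∧
      W {0, i, -1} = quadraticChar F i * W {0, 1, i} ∧
      W {0, -1, -i} = W {0, 1, i} ∧
      W {0, 1, -i} = quadraticChar F i * W {0, 1, i} ∧
      W {i, -1, -i} = quadraticChar F i * W {1, i, -1} ∧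
      W {1, -1, -i} = W {1, i, -1} ∧
      W {1, i, -i} = quadraticChar F i * W {1, i, -1} := by
  have hi0 := ne_zero_of_mul_self_eq_neg_one hi
  have hrot := shiftedCharSum_rotate_three hi0
  have hsq (y : ℤ) : quadraticChar F i * (quadraticChar F i * y) = y := by
    rw [← mul_assoc, ← sq, quadraticChar_sq_one hi0, one_mul]
  generalize quadraticChar F i = c at *
  have hA : W {0, i, -i} = c * W {0, 1, -1} := by simpa [hi] using hrot 0 1 (-1)
  have hT₁ : W {0, i, -1} = c * W {0, 1, i} := by simpa [hi] using hrot 0 1 i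
  have hT₂ : W {0, -1, -i} = W {0, 1, i} := by
    rw [← hsq (W {0, 1, i}), ← hT₁]
    simpa [hi] using hrot 0 i (-1)
  have hT₃ : W {0, 1, -i} = c * W {0, 1, i} := by
    rw [Multiset.pair_comm, ← hT₂]
    simpa [hi] using hrot 0 (-1) (-i)
  have hU₁ : W {i, -1, -i} = c * W {1, i, -1} := by simpa [hi] using hrot 1 i (-1)
  have hU₂ : W {1, -1, -i} = W {1, i, -1} := by
    rw [triple_eq_cycle, ← hsq (W {1, i, -1}), ← hU₁]
    simpa [hi] using hrot i (-1) (-i)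
  have hU₃ : W {1, i, -i} = c * W {1, i, -1} := by
    rw [← hU₂, triple_eq_cycle 1 (-1), ← triple_eq_cycle (-i)]
    simpa [hi] using hrot (-1) (-i) 1
  exact ⟨hA, hT₁, hT₂, hT₃, hU₁, hU₂, hU₃⟩

theorem shiftedCharSum_four_eq (hi : i * i = -1) :
    W {0, 1, i, -1} = quadraticChar F i * W {1, i, -1} - 1 ∧
      W {0, i, -1, -i} = quadraticChar F i * W {1, i, -1} - 1 ∧
      W {0, 1, -1, -i} = quadraticChar F i * W {1, i, -1} - 1 ∧
      W {0, 1, i, -i} = quadraticChar F i * W {1, i, -1} - 1 := by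
  have hrot := shiftedCharSum_rotate_four (ne_zero_of_mul_self_eq_neg_one hi)
  have h₁ : W {0, i, -1, -i} = W {0, 1, i, -1} := by simpa [hi] using hrot 0 1 i (-1)
  have h₂ : W {0, 1, -1, -i} = W {0, 1, i, -1} := by
    rw [triple_eq_cycle, ← h₁]
    simpa [hi] using hrot 0 i (-1) (-i)
  have h₃ : W {0, 1, i, -i} = W {0, 1, i, -1} := by
    rw [← triple_eq_cycle, ← h₂, triple_eq_cycle 1]
    simpa [hi] using hrot 0 (-1) (-i) 1
  rw [h₁, h₂, h₃]
  simp only [shiftedCharSum_zero_one_i_neg_one hi, and_self]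

theorem sum_prod_one_sub_fivePotents (hF : ringChar F ≠ 2) (hi : i * i = -1) :
    ∑ x, (({0, 1, i, -1, -i} : Multiset F).map fun r => 1 - quadraticChar F (x - r)).prod =
      Fintype.card F - 15 - quadraticChar F i * W {0, 1, -1}
        - 2 * (1 + quadraticChar F i) * W {0, 1, i} + 2 * (quadraticChar F i - 1) * W {1, i, -1}
        - W {0, 1, i, -1, -i} := by
  have hχ : quadraticChar F ≠ 1 := quadraticChar_ne_one hF
  have hnodup := nodup_zero_fourthRoots hF hi
  have hpair {r s : F} (hrs : r ≠ s) : W {r, s} = -1 :=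
    shiftedCharSum_pair hχ (quadraticChar_isQuadratic F).sq_eq_one hrs
  have hcubic := shiftedCharSum_three_eq hi
  have hquartic := shiftedCharSum_four_eq hi
  have hfour := shiftedCharSum_fourthRoots hF hi
  rw [sum_prod_one_sub_eq_sum_shiftedCharSum]
  generalize quadraticChar F i = c at *
  simp only [Multiset.insert_eq_cons, Multiset.nodup_cons, Multiset.mem_cons,
    Multiset.mem_singleton, not_or] at *
  simp only [← Multiset.cons_zero, Multiset.powerset_cons, Multiset.powerset_zero, Multiset.map_add,
    Multiset.map_cons, Multiset.map_zero]
  simp only [Int.reduceNeg, Multiset.card_zero, pow_zero, shiftedCharSum_zero, one_mul,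
    Multiset.cons_zero, Multiset.card_singleton, pow_one, shiftedCharSum_singleton hχ, mul_zero,
    Multiset.singleton_add, Multiset.card_cons, Nat.reduceAdd, even_two, Even.neg_pow, one_pow,
    ne_eq, hnodup, not_false_eq_true, hpair, mul_neg, mul_one, Multiset.add_cons, Multiset.cons_add,
    Int.reducePow, hcubic, neg_mul, hfour, hquartic, Multiset.sum_cons, Multiset.sum_singleton,
    zero_add]
  ring

theorem lt_sum_prod_one_sub_fivePotents (hF : ringChar F ≠ 2) (hi : i * i = -1)
    (hq : 2623 ≤ Fintype.card F) :
    5 * 2 ^ 5 <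
      ∑ x, (({0, 1, i, -1, -i} : Multiset F).map fun r => 1 - quadraticChar F (x - r)).prod := by
  have hA := mul_abs_shiftedCharSum_le_of_card_eq_three hF (T := {0, 1, -1}) (by omega) rfl
  have hT := mul_abs_shiftedCharSum_le_of_card_eq_three hF (T := {0, 1, i}) (by omega) rfl
  have hU := mul_abs_shiftedCharSum_le_of_card_eq_three hF (T := {1, i, -1}) (by omega) rfl
  have hV := mul_abs_shiftedCharSum_le_of_card_eq_five hF (T := {0, 1, i, -1, -i}) hq rfl
  have : (2623 : ℤ) ≤ Fintype.card F := by exact_mod_cast hq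
  have hi0 := ne_zero_of_mul_self_eq_neg_one hi
  rw [sum_prod_one_sub_fivePotents hF hi]
  rcases quadraticChar_dichotomy hi0 with hc | hc <;> rw [hc] <;>
    linarith [le_abs_self (W {0, 1, -1}), neg_abs_le (W {0, 1, -1}), le_abs_self (W {0, 1, i}),
      le_abs_self (W {1, i, -1}), le_abs_self (W {0, 1, i, -1, -i})]

end FivePotents

theorem not_sum_of_five_potent_and_n_potent_d_eq_two_general
    (q n : ℕ) (hq4 : q % 4 = 1) (hq' : 2623 ≤ q) (hn : n = (q - 1) / 2 + 1)
    (F : Type*) [Field F] [Fintype F] (hF : Fintype.card F = q) :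
    ¬ (∀ γ : F, ∃ a b : F, a ^ 5 = a ∧ b ^ n = b ∧ a + b = γ) := by
  classical
  subst hF
  have hchar : ringChar F ≠ 2 := fun h => by
    have := FiniteField.even_card_of_char_two h
    omega
  obtain ⟨i, hi⟩ : IsSquare (-1 : F) := FiniteField.isSquare_neg_one_iff.mpr (by omega)
  intro hsum
  refine (lt_sum_prod_one_sub_fivePotents hchar hi.symm hq').not_ge ?_
  refine sum_prod_one_sub_quadraticChar_le (T := {0, 1, i, -1, -i}) fun γ => ?_
  obtain ⟨a, b, ha, hb, rfl⟩ := hsum γ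
  rw [hn, show (Fintype.card F - 1) / 2 = Fintype.card F / 2 by omega] at hb
  refine ⟨a, mem_of_pow_five_eq_self hi.symm ha, ?_⟩
  rw [add_sub_cancel_left]
  exact eq_zero_or_quadraticChar_eq_one_of_pow_eq_self hchar hb

/-- If `q ≡ 1 (mod 4)` is a prime power with `q > 2809` and `n - 1 = (q-1)/2`, then not every
element of the finite field with `q` elements is the sum of a `5`-potent and an
`n`-potent. -/
theorem not_sum_of_five_potent_and_n_potent_d_eq_two
    (q n : ℕ) (hq : IsPrimePow q) (hq4 : q % 4 = 1) (hq' : 2809 < q)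
    (hn : n = (q - 1) / 2 + 1)
    (F : Type*) [Field F] [Fintype F] (hF : Fintype.card F = q) :
    ¬ (∀ γ : F, ∃ a b : F, a ^ 5 = a ∧ b ^ n = b ∧ a + b = γ) :=
  not_sum_of_five_potent_and_n_potent_d_eq_two_general q n hq4 (by omega) hn F hF
end
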